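/- arXiv:1702.01694 — 2 statements merged into one kernel-verified Lean document; each statement's English description precedes it below -/
import Mathlib

section
/- Assume k is an integral domain. Then for each i ∈ {1,2,3,4}, the localization B_{x_i} of B = C/𝒟 at the powers of the image of x_i is an integral domain. -/
set_option maxSynthPendingDepth 3

open MvPolynomial

/-- Index type for the coefficient indeterminates `U_{i,α}`, `i ∈ {1,2}`,
`α` an exponent vector in four variables with `|α| = d i`. -/
def CoefIdx (d : Fin 2 → ℕ) : Type :=
  Σ i : Fin 2, {α : Fin 4 →₀ ℕ // (α.sum fun _ e => e) = d i}

/-- The universal ring of coefficients `A = k[U_{i,α}]`. -/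
abbrev Aring (k : Type*) [CommRing k] (d : Fin 2 → ℕ) : Type _ :=
  MvPolynomial (CoefIdx d) k

/-- The polynomial ring `C = A[x₁,x₂,x₃,x₄]`. -/
abbrev Cring (k : Type*) [CommRing k] (d : Fin 2 → ℕ) : Type _ :=
  MvPolynomial (Fin 4) (Aring k d)

/-- The generic homogeneous polynomial `f_i = Σ_{|α| = d i} U_{i,α} x^α` of degree `d i`. -/
noncomputable def genF (k : Type*) [CommRing k] (d : Fin 2 → ℕ) (i : Fin 2) : Cring k d :=
  ∑ α ∈ (Finset.finsuppAntidiag (Finset.univ : Finset (Fin 4)) (d i)).attach,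
    monomial α.1 (X (⟨i, ⟨α.1, (Finset.mem_finsuppAntidiag'.mp α.2).1⟩⟩ : CoefIdx d))

/-- The 2-minors `J_{r,s} = ∂ᵣf₁·∂ₛf₂ − ∂ₛf₁·∂ᵣf₂` of the Jacobian matrix of `(f₁,f₂)`. -/
noncomputable def Jmin (k : Type*) [CommRing k] (d : Fin 2 → ℕ) (r s : Fin 4) : Cring k d :=
  pderiv r (genF k d 0) * pderiv s (genF k d 1) -
    pderiv s (genF k d 0) * pderiv r (genF k d 1)

/-- The ideal `𝒟 = (f₁, f₂) + (J_{r,s} : r < s) ⊂ C`. -/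
noncomputable def Dideal (k : Type*) [CommRing k] (d : Fin 2 → ℕ) : Ideal (Cring k d) :=
  Ideal.span ({genF k d 0, genF k d 1} ∪ {p | ∃ r s : Fin 4, r < s ∧ p = Jmin k d r s})

/-!
Write `fⱼ = gⱼ + xᵢ ^ (dⱼ - 1) ∑ᵣ U_{jr} xᵣ`, singling out the coefficients of the monomials
`xᵢ ^ (dⱼ - 1) xᵣ`. Where `xᵢ` is invertible, one may trade the indeterminates `U_{jr}` for the
`fⱼ` and the derivatives `∂ᵣ fⱼ` with `r ≠ i`: the latter determine `U_{jr}` for `r ≠ i`, and then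
`fⱼ` determines `U_{ji}`. In these coordinates the ideal says that the `fⱼ` vanish and that the
Jacobian matrix has vanishing 2-minors. By Euler's identity the minors involving the `i`-th column
follow from the others once the `fⱼ` vanish. So the localization is a ring of polynomials in the
remaining coordinates modulo the 2-minors of a generic matrix, over a localized polynomial ring
over `k`. That ring is a domain because the 2-minors generate the kernel of the Segre homomorphism
`Y_{jr} ↦ a_j b_r`.
-/

section TwoMinors

variable {ι κ R S T : Type*} [CommRing R] [CommRing S] [CommRing T]

/-- All `2 × 2` minors of `m` vanish, that is, `m` has determinantal rank at most one. The
indices are unrestricted; repeated ones contribute only trivial identities. -/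
def VanishingTwoMinors (m : Matrix ι κ S) : Prop :=
  ∀ i j r s, m i r * m j s = m i s * m j r

/-- The determinantal ideal `I₂(m)` generated by the `2 × 2` minors of `m`. -/
def twoMinorsIdeal (m : Matrix ι κ S) : Ideal S :=
  Ideal.span {p | ∃ i j r s, p = m i r * m j s - m i s * m j r}

theorem twoMinorsIdeal_le_ker_iff {m : Matrix ι κ S} {g : S →+* T} :
    twoMinorsIdeal m ≤ RingHom.ker g ↔ VanishingTwoMinors (m.map g) := by
  rw [twoMinorsIdeal, Ideal.span_le]
  constructor
  · intro h i j r s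
    have hker : g (m i r * m j s - m i s * m j r) = 0 := h ⟨i, j, r, s, rfl⟩
    simpa [sub_eq_zero] using hker
  · rintro h _ ⟨i, j, r, s, rfl⟩
    simpa [sub_eq_zero] using h i j r s

theorem VanishingTwoMinors.submatrix {ι' κ' : Type*} {m : Matrix ι κ S}
    (hm : VanishingTwoMinors m) (a : ι' → ι) (b : κ' → κ) :
    VanishingTwoMinors (m.submatrix a b) :=
  fun i j r s => hm (a i) (a j) (b r) (b s)

theorem vanishingTwoMinors_fin_two_iff [LinearOrder κ] {m : Matrix (Fin 2) κ S} :
    VanishingTwoMinors m ↔ ∀ r s, r < s → m 0 r * m 1 s = m 0 s * m 1 r := by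
  refine ⟨fun hm r s _ => hm 0 1 r s, fun hm => ?_⟩
  have hm' (r s) : m 0 r * m 1 s = m 0 s * m 1 r := by
    obtain hrs | rfl | hsr := lt_trichotomy r s
    · exact hm r s hrs
    · rfl
    · exact (hm s r hsr).symm
  rw [VanishingTwoMinors, Fin.forall_fin_two, Fin.forall_fin_two, Fin.forall_fin_two]
  exact ⟨⟨fun r s => mul_comm _ _, hm'⟩, fun r s => by linear_combination -hm' r s,
    fun r s => mul_comm _ _⟩

theorem VanishingTwoMinors.multiset_prod_eq {m : Matrix ι κ S} (hm : VanishingTwoMinors m)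
    {M N : Multiset (ι × κ)} (hfst : M.map Prod.fst = N.map Prod.fst)
    (hsnd : M.map Prod.snd = N.map Prod.snd) :
    (M.map fun c => m c.1 c.2).prod = (N.map fun c => m c.1 c.2).prod := by
  induction M using Multiset.induction_on generalizing N with
  | empty => rw [Multiset.map_eq_zero.1 hfst.symm]
  | cons c M ih =>
    obtain ⟨i, r⟩ := c
    obtain ⟨⟨i, s⟩, his, rfl⟩ := Multiset.mem_map.1 (hfst ▸ Multiset.mem_map_of_mem Prod.fst
      (Multiset.mem_cons_self (i, r) M))
    obtain ⟨⟨j, r⟩, hjr, rfl⟩ := Multiset.mem_map.1 (hsnd ▸ Multiset.mem_map_of_mem Prod.snd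
      (Multiset.mem_cons_self (i, r) M))
    obtain ⟨N, rfl⟩ := Multiset.exists_cons_of_mem his
    rcases Multiset.mem_cons.1 hjr with heq | hjr
    · obtain ⟨rfl, rfl⟩ := Prod.ext_iff.1 heq
      simp only [Multiset.map_cons, Multiset.cons_inj_right] at hfst hsnd
      simp only [Multiset.map_cons, Multiset.prod_cons, ih hfst hsnd]
    · obtain ⟨N, rfl⟩ := Multiset.exists_cons_of_mem hjr
      -- Exchange columns, `m i s * m j r = m i r * m j s`, so that `N` contains `(i, r)`.
      have ih' := @ih ((j, s) ::ₘ N) (by simpa using hfst)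
        (by simpa [Multiset.cons_swap s r] using hsnd)
      simp only [Multiset.map_cons, Multiset.prod_cons] at ih' ⊢
      rw [ih', ← mul_assoc, ← mul_assoc, hm i j r s]

end TwoMinors

section Segre

variable {ι κ τ τ' R S : Type*} [CommRing R] [CommRing S]

/- Collapsing the fibres of `μ` is all that `φ` does, so `ψ` factors linearly through `φ`. -/
theorem ker_le_ker_of_monomial [Algebra R S]
    (φ : MvPolynomial τ R →ₐ[R] MvPolynomial τ' R) (ψ : MvPolynomial τ R →ₐ[R] S)
    (μ : (τ →₀ ℕ) → τ' →₀ ℕ) (hφ : ∀ a, φ (monomial a 1) = monomial (μ a) 1)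
    (hψ : ∀ a b, μ a = μ b → ψ (monomial a 1) = ψ (monomial b 1)) :
    RingHom.ker φ ≤ RingHom.ker ψ := by
  let F : (τ' →₀ ℕ) → S := Function.extend μ (fun a => ψ (monomial a 1)) 0
  let θ : MvPolynomial τ' R →ₗ[R] S := (basisMonomials τ' R).constr R F
  have hθ (b) : θ (monomial b 1) = F b := by
    simpa using (basisMonomials τ' R).constr_basis R F b
  have hfactor : ψ.toLinearMap = θ ∘ₗ φ.toLinearMap := by
    refine (basisMonomials τ R).ext fun a => ?_
    have hF : F (μ a) = ψ (monomial a 1) :=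
      Function.FactorsThrough.extend_apply (fun a b => hψ a b) 0 a
    simp [hφ, hθ, hF]
  intro p hp
  have hφp : φ p = 0 := hp
  have hψp := LinearMap.congr_fun hfactor p
  simpa [hφp] using hψp

variable (ι κ R) in
/-- The Segre homomorphism `R[Y_{jr}] → R[a_j, b_r]`, `Y_{jr} ↦ a_j b_r`. -/
noncomputable def segreHom : MvPolynomial (ι × κ) R →ₐ[R] MvPolynomial (ι ⊕ κ) R :=
  aeval fun c => X (Sum.inl c.1) * X (Sum.inr c.2)

theorem segreHom_monomial (a : ι × κ →₀ ℕ) :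
    segreHom ι κ R (monomial a 1) =
      monomial (Finsupp.sumElim (a.mapDomain Prod.fst) (a.mapDomain Prod.snd)) 1 := by
  induction a using Finsupp.induction_linear with
  | zero => simp [segreHom]
  | add a b ha hb =>
    have hexp : Finsupp.sumElim (a.mapDomain Prod.fst) (a.mapDomain Prod.snd) +
        Finsupp.sumElim (b.mapDomain Prod.fst) (b.mapDomain Prod.snd) =
        Finsupp.sumElim ((a + b).mapDomain Prod.fst) ((a + b).mapDomain Prod.snd) := by
      ext (j | r) <;> simp [Finsupp.mapDomain_add]
    rw [← one_mul (1 : R), ← monomial_mul, map_mul, ha, hb, monomial_mul, hexp]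
  | single c n =>
    have hexp : Finsupp.single (Sum.inl c.1) n + Finsupp.single (Sum.inr c.2) n =
        Finsupp.sumElim ((Finsupp.single c n).mapDomain Prod.fst)
          ((Finsupp.single c n).mapDomain Prod.snd) := by
      ext (j | r) <;> simp
    rw [← X_pow_eq_monomial, map_pow, segreHom, aeval_X, mul_pow, X_pow_eq_monomial,
      X_pow_eq_monomial, monomial_mul, hexp, one_mul]

theorem aeval_monomial_eq_multiset_prod [Algebra R S] (w : τ → S) (a : τ →₀ ℕ) :
    aeval w (monomial a (1 : R)) = (a.toMultiset.map w).prod := by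
  rw [aeval_monomial, map_one, one_mul, Finsupp.toMultiset_map, Finsupp.prod_toMultiset,
    Finsupp.prod_mapDomain_index (fun _ => pow_zero _) (fun _ _ _ => pow_add _ _ _)]

variable (ι κ R) in
theorem ker_segreHom :
    RingHom.ker (segreHom ι κ R) = twoMinorsIdeal (Matrix.mvPolynomialX ι κ R) := by
  apply le_antisymm
  · let I := twoMinorsIdeal (Matrix.mvPolynomialX ι κ R)
    have hI : VanishingTwoMinors ((Matrix.mvPolynomialX ι κ R).map (Ideal.Quotient.mk I)) :=
      twoMinorsIdeal_le_ker_iff.1 Ideal.mk_ker.ge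
    change _ ≤ I
    rw [← Ideal.Quotient.mkₐ_ker R I]
    refine ker_le_ker_of_monomial _ _ _ segreHom_monomial fun a b hab => ?_
    rw [aeval_unique (Ideal.Quotient.mkₐ R I), aeval_monomial_eq_multiset_prod,
      aeval_monomial_eq_multiset_prod]
    apply hI.multiset_prod_eq
    · rw [Finsupp.toMultiset_map, Finsupp.toMultiset_map]
      congr 1
      ext j
      simpa using DFunLike.congr_fun hab (Sum.inl j)
    · rw [Finsupp.toMultiset_map, Finsupp.toMultiset_map]
      congr 1
      ext r
      simpa using DFunLike.congr_fun hab (Sum.inr r)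
  · refine (twoMinorsIdeal_le_ker_iff (g := (segreHom ι κ R).toRingHom)).2 fun i j r s => ?_
    simp only [segreHom, AlgHom.toRingHom_eq_coe, Matrix.map_apply,
      Matrix.mvPolynomialX_apply, RingHom.coe_coe, aeval_X]
    ring

instance isPrime_twoMinorsIdeal_mvPolynomialX [IsDomain R] :
    (twoMinorsIdeal (Matrix.mvPolynomialX ι κ R)).IsPrime :=
  ker_segreHom ι κ R ▸ RingHom.ker_isPrime _

theorem exists_ringHom_quotient_twoMinorsIdeal (ρ : R →+* S) {y : Matrix ι κ S}
    (hy : VanishingTwoMinors y) :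
    ∃ Ψ : MvPolynomial (ι × κ) R ⧸ twoMinorsIdeal (Matrix.mvPolynomialX ι κ R) →+* S,
      Ψ.comp ((Ideal.Quotient.mk _).comp C) = ρ ∧
        (Matrix.mvPolynomialX ι κ R).map (fun p => Ψ (Ideal.Quotient.mk _ p)) = y := by
  let Ψ := eval₂Hom ρ fun c : ι × κ => y c.1 c.2
  have hΨ : (Matrix.mvPolynomialX ι κ R).map Ψ = y := Matrix.mvPolynomialX_map_eval₂ ρ y
  exact ⟨Ideal.Quotient.lift _ Ψ (twoMinorsIdeal_le_ker_iff.2 (hΨ.symm ▸ hy)),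
    RingHom.ext fun a => eval₂_C _ _ a, hΨ⟩

end Segre

section Degeneracy

variable {A S σ ι : Type*} [CommRing A] [CommRing S]

/-- The Jacobian matrix `(∂ᵣ fⱼ)` of a family of polynomials. -/
noncomputable def jacobianMatrix (f : ι → MvPolynomial σ A) : Matrix ι σ (MvPolynomial σ A) :=
  Matrix.of fun j r => pderiv r (f j)

/-- The Jacobian matrix without its column `i`. By Euler's identity the omitted column is
determined by the others at the zeros of homogeneous `f j` where `xᵢ` is invertible. -/
noncomputable def reducedJacobianMatrix (f : ι → MvPolynomial σ A) (i : σ) :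
    Matrix ι {r // r ≠ i} (MvPolynomial σ A) :=
  (jacobianMatrix f).submatrix id Subtype.val

/-- The ideal of the locus where all `f j` vanish and their Jacobian matrix has rank at most
one. For two polynomials and `σ = Fin 4` this is the ideal `𝒟`. -/
noncomputable def degeneracyIdeal (f : ι → MvPolynomial σ A) : Ideal (MvPolynomial σ A) :=
  Ideal.span (Set.range f) ⊔ twoMinorsIdeal (jacobianMatrix f)

theorem degeneracyIdeal_le_ker_iff {f : ι → MvPolynomial σ A} {Φ : MvPolynomial σ A →+* S} :
    degeneracyIdeal f ≤ RingHom.ker Φ ↔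
      (∀ j, Φ (f j) = 0) ∧ VanishingTwoMinors ((jacobianMatrix f).map Φ) := by
  rw [degeneracyIdeal, sup_le_iff, twoMinorsIdeal_le_ker_iff, Ideal.span_le, Set.range_subset_iff]
  rfl

theorem vanishingTwoMinors_of_sum_eq_zero [Fintype σ] {m : Matrix ι σ S} {x : σ → S} {i : σ}
    (hx : IsUnit (x i)) (hsum : ∀ j, ∑ r, x r * m j r = 0)
    (hm : VanishingTwoMinors (m.submatrix id (Subtype.val : {r // r ≠ i} → σ))) :
    VanishingTwoMinors m := by
  classical
  have hne (j j' : ι) {r s : σ} (hr : r ≠ i) (hs : s ≠ i) : m j r * m j' s = m j s * m j' r :=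
    hm j j' ⟨r, hr⟩ ⟨s, hs⟩
  have hcol (j j' : ι) {s : σ} (hs : s ≠ i) : m j i * m j' s = m j s * m j' i := by
    have hexpand : ∑ r, x r * (m j r * m j' s - m j s * m j' r) = 0 := by
      calc ∑ r, x r * (m j r * m j' s - m j s * m j' r)
          = (∑ r, x r * m j r) * m j' s - m j s * ∑ r, x r * m j' r := by
            rw [Finset.sum_mul, Finset.mul_sum, ← Finset.sum_sub_distrib]
            exact Finset.sum_congr rfl fun r _ => by ring
        _ = 0 := by rw [hsum, hsum, zero_mul, mul_zero, sub_zero]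
    rw [Fintype.sum_eq_single i fun r hr => by rw [hne j j' hr hs, sub_self, mul_zero]] at hexpand
    exact sub_eq_zero.1 (hx.mul_right_eq_zero.1 hexpand)
  intro j j' r s
  by_cases hr : r = i <;> by_cases hs : s = i
  · rw [hr, hs]
  · rw [hr, hcol j j' hs]
  · rw [hs, hcol j j' hr]
  · exact hne j j' hr hs

theorem degeneracyIdeal_le_ker_of_isHomogeneous [Finite σ] {f : ι → MvPolynomial σ A} {d : ι → ℕ}
    (hf : ∀ j, (f j).IsHomogeneous (d j)) {Φ : MvPolynomial σ A →+* S} {i : σ}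
    (hi : IsUnit (Φ (X i))) (hzero : ∀ j, Φ (f j) = 0)
    (hminors : VanishingTwoMinors ((reducedJacobianMatrix f i).map Φ)) :
    degeneracyIdeal f ≤ RingHom.ker Φ := by
  cases nonempty_fintype σ
  refine degeneracyIdeal_le_ker_iff.2 ⟨hzero,
    vanishingTwoMinors_of_sum_eq_zero (x := fun r => Φ (X r)) hi (fun j => ?_) hminors⟩
  have heuler := congrArg Φ (hf j).sum_X_mul_pderiv
  simpa [jacobianMatrix, hzero] using heuler

end Degeneracy

section GenericPerturbation

variable {R A S σ ι : Type*} [CommRing R] [CommRing A] [CommRing S]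
  (e : MvPolynomial (ι × σ) R ≃+* A)

/-- The inclusion `R[x] → A[x]` induced by `R → R[U] ≃ A`. -/
noncomputable def baseInclusion : MvPolynomial σ R →+* MvPolynomial σ A :=
  map ((e : MvPolynomial (ι × σ) R →+* A).comp C)

theorem baseInclusion_X (r : σ) : baseInclusion e (X r) = X r :=
  map_X _ r

theorem exists_ringHom_extending (ρ : MvPolynomial σ R →+* S) (u : ι × σ → S) :
    ∃ Φ : MvPolynomial σ A →+* S,
      Φ.comp (baseInclusion e) = ρ ∧ ∀ c, Φ (C (e (X c))) = u c := by
  refine ⟨eval₂Hom ((eval₂Hom (ρ.comp C) u).comp (e.symm : A →+* _)) (fun r => ρ (X r)),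
    ringHom_ext ?_ ?_, ?_⟩ <;> simp [baseInclusion]

variable [Fintype σ] (g : ι → MvPolynomial σ R) (n : ι → ℕ) (i : σ)

/-- The family `fⱼ = gⱼ + xᵢ ^ nⱼ · ∑ᵣ U_{jr} xᵣ`, where `gⱼ` does not involve the
indeterminates `U`. Here `A` is the polynomial ring `R[U]`, via `e`. -/
noncomputable def genericPerturbation (j : ι) : MvPolynomial σ A :=
  baseInclusion e (g j) + X i ^ n j * ∑ r, C (e (X (j, r))) * X r

theorem pderiv_genericPerturbation (j : ι) {r : σ} (hr : r ≠ i) :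
    pderiv r (genericPerturbation e g n i j) =
      baseInclusion e (pderiv r (g j)) + X i ^ n j * C (e (X (j, r))) := by
  classical
  simp [genericPerturbation, baseInclusion, pderiv_map, Derivation.leibniz, Derivation.leibniz_pow,
    pderiv_X, Pi.single_apply, hr.symm]

variable {e g n i}

/- Where `xᵢ` is invertible, the `fⱼ` and `∂ᵣ fⱼ` for `r ≠ i` are affine coordinates over
`R[x]`, as the `U_{jr}` are: this and `exists_ringHom_genericPerturbation` express it. -/
theorem ringHom_ext_genericPerturbation {Φ Ψ : MvPolynomial σ A →+* S}
    (hbase : Φ.comp (baseInclusion e) = Ψ.comp (baseInclusion e)) (hi : IsUnit (Φ (X i)))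
    (hf : ∀ j, Φ (genericPerturbation e g n i j) = Ψ (genericPerturbation e g n i j))
    (hderiv : (reducedJacobianMatrix (genericPerturbation e g n i) i).map Φ =
      (reducedJacobianMatrix (genericPerturbation e g n i) i).map Ψ) : Φ = Ψ := by
  classical
  have hbase' (p) : Φ (baseInclusion e p) = Ψ (baseInclusion e p) := RingHom.congr_fun hbase p
  have hX (r) : Φ (X r) = Ψ (X r) := by simpa [baseInclusion_X] using hbase' (X r)
  have hU_ne (j r) (hr : r ≠ i) : Φ (C (e (X (j, r)))) = Ψ (C (e (X (j, r)))) := by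
    have h : Φ (pderiv r (genericPerturbation e g n i j)) =
        Ψ (pderiv r (genericPerturbation e g n i j)) :=
      congrFun (congrFun hderiv j) ⟨r, hr⟩
    simp only [pderiv_genericPerturbation e g n i j hr, map_add, map_mul, map_pow, hbase',
      ← hX, add_right_inj] at h
    exact (hi.pow _).mul_left_cancel h
  have hU_self (j) : Φ (C (e (X (j, i)))) = Ψ (C (e (X (j, i)))) := by
    have h := hf j
    simp only [genericPerturbation, map_add, map_mul, map_pow, map_sum, hbase', ← hX,
      add_right_inj] at h
    replace h := (hi.pow _).mul_left_cancel h
    rw [Fintype.sum_eq_add_sum_subtype_ne _ i, Fintype.sum_eq_add_sum_subtype_ne _ i,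
      Fintype.sum_congr _ _ fun r : {r // r ≠ i} => by rw [hU_ne j r r.2], add_left_inj] at h
    exact hi.mul_right_cancel h
  have hcoeff : (Φ.comp C).comp (e : MvPolynomial (ι × σ) R →+* A) =
      (Ψ.comp C).comp (e : MvPolynomial (ι × σ) R →+* A) := by
    refine ringHom_ext (fun a => by simpa [baseInclusion] using hbase' (C a)) ?_
    rintro ⟨j, r⟩
    obtain rfl | hr := eq_or_ne r i
    · exact hU_self j
    · exact hU_ne j r hr
  refine ringHom_ext (fun a => ?_) hX
  simpa using RingHom.congr_fun hcoeff (e.symm a)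

theorem exists_linear_solution {x : σ → S} (hx : IsUnit (x i)) {t : S} (ht : IsUnit t)
    (a y : {r // r ≠ i} → S) (b : S) :
    ∃ u : σ → S, (∀ r : {r // r ≠ i}, a r + t * u r = y r) ∧ b + t * ∑ r, u r * x r = 0 := by
  classical
  obtain ⟨t', ht'⟩ := ht.exists_right_inv
  obtain ⟨x', hx'⟩ := hx.exists_right_inv
  let v (r : {r // r ≠ i}) : S := t' * (y r - a r)
  let w : S := -(t' * b + ∑ r, v r * x r) * x'
  let u (r : σ) : S := if hr : r ≠ i then v ⟨r, hr⟩ else w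
  have hu_ne (r : {r // r ≠ i}) : u r = v r := dif_pos r.2
  have hu_self : u i = w := dif_neg (not_not.2 rfl)
  refine ⟨u, fun r => ?_, ?_⟩
  · rw [hu_ne]
    linear_combination (y r - a r) * ht'
  · simp only [Fintype.sum_eq_add_sum_subtype_ne _ i, hu_self, hu_ne]
    linear_combination -t * (t' * b + ∑ r, v r * x r) * hx' - b * ht'

theorem exists_ringHom_genericPerturbation (ρ : MvPolynomial σ R →+* S) (hi : IsUnit (ρ (X i)))
    (y : Matrix ι {r // r ≠ i} S) :
    ∃ Φ : MvPolynomial σ A →+* S, Φ.comp (baseInclusion e) = ρ ∧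
      (∀ j, Φ (genericPerturbation e g n i j) = 0) ∧
      (reducedJacobianMatrix (genericPerturbation e g n i) i).map Φ = y := by
  choose u hderiv hf using fun j => exists_linear_solution (x := fun r => ρ (X r)) hi
    (hi.pow (n j)) (fun r => ρ (pderiv r.1 (g j))) (y j) (ρ (g j))
  obtain ⟨Φ, hbase, hU⟩ := exists_ringHom_extending (e := e) ρ fun c => u c.1 c.2
  have hbase' (p) : Φ (baseInclusion e p) = ρ p := RingHom.congr_fun hbase p
  have hX (r) : Φ (X r) = ρ (X r) := by simpa [baseInclusion_X] using hbase' (X r)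
  refine ⟨Φ, hbase, fun j => ?_, ?_⟩
  · simpa [genericPerturbation, hbase', hX, hU] using hf j
  · ext j r
    simpa [reducedJacobianMatrix, jacobianMatrix, pderiv_genericPerturbation e g n i j r.2,
      hbase', hX, hU] using hderiv j r

end GenericPerturbation

section Localization

variable {R A P M σ ι : Type*} [CommRing R] [CommRing A] [CommRing P] [CommRing M]

theorem isDomain_localizationAway_quotient_of_comp_eq [IsDomain M] {I : Ideal P} {x : P}
    (Φ : P →+* M) (hI : I ≤ RingHom.ker Φ) (hx : IsUnit (Φ x))
    (Ψ : M →+* Localization.Away (Ideal.Quotient.mk I x))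
    (hΨΦ : Ψ.comp Φ = (algebraMap (P ⧸ I) _).comp (Ideal.Quotient.mk I)) :
    IsDomain (Localization.Away (Ideal.Quotient.mk I x)) := by
  let Φ' : P ⧸ I →+* M := Ideal.Quotient.lift I Φ hI
  have hx' : IsUnit (Φ' (Ideal.Quotient.mk I x)) := hx
  let Φ'' : Localization.Away (Ideal.Quotient.mk I x) →+* M :=
    IsLocalization.Away.lift (Ideal.Quotient.mk I x) hx'
  have hΦ'' : Φ''.comp (algebraMap (P ⧸ I) _) = Φ' := IsLocalization.Away.lift_comp _ hx'
  have hleft : Ψ.comp Φ'' = RingHom.id _ := by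
    refine IsLocalization.ringHom_ext (Submonoid.powers (Ideal.Quotient.mk I x))
      (Ideal.Quotient.ringHom_ext ?_)
    rw [RingHom.comp_assoc _ Φ'' Ψ, hΦ'', RingHom.comp_assoc, Ideal.Quotient.lift_comp_mk I Φ hI,
      hΨΦ, RingHom.id_comp]
  exact (Function.LeftInverse.injective (g := Ψ) (RingHom.congr_fun hleft)).isDomain Φ''

variable [Fintype σ] {e : MvPolynomial (ι × σ) R ≃+* A} {g : ι → MvPolynomial σ R} {n d : ι → ℕ}
  {i : σ}

theorem exists_ringHom_degeneracyIdeal_le_ker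
    (hhom : ∀ j, (genericPerturbation e g n i j).IsHomogeneous (d j))
    (ρ : MvPolynomial σ R →+* M) (hi : IsUnit (ρ (X i))) {y : Matrix ι {r // r ≠ i} M}
    (hy : VanishingTwoMinors y) :
    ∃ Φ : MvPolynomial σ A →+* M, Φ.comp (baseInclusion e) = ρ ∧
      degeneracyIdeal (genericPerturbation e g n i) ≤ RingHom.ker Φ ∧
      (reducedJacobianMatrix (genericPerturbation e g n i) i).map Φ = y := by
  obtain ⟨Φ, hbase, hf, hderiv⟩ :=
    exists_ringHom_genericPerturbation (e := e) (g := g) (n := n) ρ hi y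
  have hX : IsUnit (Φ (X i)) := by
    rwa [← baseInclusion_X e, ← RingHom.comp_apply, hbase]
  exact ⟨Φ, hbase, degeneracyIdeal_le_ker_of_isHomogeneous hhom hX hf (hderiv ▸ hy), hderiv⟩

theorem isDomain_localizationAway_degeneracyIdeal [IsDomain R]
    (hhom : ∀ j, (genericPerturbation e g n i j).IsHomogeneous (d j)) :
    IsDomain (Localization.Away (Ideal.Quotient.mk
      (degeneracyIdeal (genericPerturbation e g n i)) (X i))) := by
  let f := genericPerturbation e g n i
  let x : MvPolynomial σ R := X i
  let Rx := Localization.Away x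
  have : IsDomain Rx :=
    IsLocalization.isDomain_localization
      (powers_le_nonZeroDivisors_of_noZeroDivisors (X_ne_zero i))
  let Y := Matrix.mvPolynomialX ι {r // r ≠ i} Rx
  let toM := Ideal.Quotient.mk (twoMinorsIdeal Y)
  let ρ := (toM.comp C).comp (algebraMap (MvPolynomial σ R) Rx)
  have hρ : IsUnit (ρ x) := (IsLocalization.Away.algebraMap_isUnit x).map (toM.comp C)
  obtain ⟨Φ, hΦbase, hΦker, hΦderiv⟩ := exists_ringHom_degeneracyIdeal_le_ker hhom ρ hρ
    (twoMinorsIdeal_le_ker_iff.1 Ideal.mk_ker.ge : VanishingTwoMinors (Y.map toM))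
  have hΦX : IsUnit (Φ (X i)) := by
    rwa [← baseInclusion_X e, ← RingHom.comp_apply, hΦbase]
  let xB := Ideal.Quotient.mk (degeneracyIdeal f) (X i)
  let π := (algebraMap _ (Localization.Away xB)).comp (Ideal.Quotient.mk (degeneracyIdeal f))
  have hπX : IsUnit (π (X i)) := IsLocalization.Away.algebraMap_isUnit xB
  have hπker : degeneracyIdeal f ≤ RingHom.ker π := fun p hp => by
    change algebraMap _ _ (Ideal.Quotient.mk (degeneracyIdeal f) p) = 0
    rw [Ideal.Quotient.eq_zero_iff_mem.2 hp, map_zero]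
  obtain ⟨hπf, hπminors⟩ := degeneracyIdeal_le_ker_iff.1 hπker
  have hπx : IsUnit (π.comp (baseInclusion e) x) := by
    rwa [RingHom.comp_apply, baseInclusion_X]
  obtain ⟨Ψ, hΨbase, hΨY⟩ := exists_ringHom_quotient_twoMinorsIdeal
    (IsLocalization.Away.lift (S := Rx) x hπx)
    (hπminors.submatrix id (Subtype.val : {r // r ≠ i} → σ))
  refine isDomain_localizationAway_quotient_of_comp_eq Φ hΦker hΦX Ψ
    (ringHom_ext_genericPerturbation (e := e) (g := g) (n := n) ?_ (hΦX.map Ψ)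
      (fun j => ?_) ?_)
  · rw [RingHom.comp_assoc, hΦbase, ← RingHom.comp_assoc, hΨbase, IsLocalization.Away.lift_comp]
  · rw [RingHom.comp_apply, (degeneracyIdeal_le_ker_iff.1 hΦker).1, map_zero]
    exact (hπf j).symm
  · rw [RingHom.coe_comp, ← Matrix.map_map, hΦderiv]
    exact hΨY

end Localization

section KillCompl

variable {k τ υ : Type*} [CommRing k] {f : τ → υ} (hf : Function.Injective f) {c : υ}

theorem killCompl_X_eq_zero (hc : c ∉ Set.range f) : killCompl hf (X c : MvPolynomial υ k) = 0 := by
  rw [killCompl, aeval_X, dif_neg hc]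

theorem rename_killCompl_X (hc : c ∈ Set.range f) :
    rename f (killCompl hf (X c : MvPolynomial υ k)) = X c := by
  obtain ⟨c, rfl⟩ := hc
  rw [← rename_X (R := k) f c, killCompl_rename_app]

end KillCompl

section IteratedEquiv

variable {k τ υ : Type*} [CommRing k] {s : τ → υ}

variable (k) in
/-- The isomorphism `k[V][U] ≃ k[U, V]`, where the indeterminates `U` are singled out among
all of them by the injection `s` and `V` are the remaining ones. -/
noncomputable def iteratedEquivOfInjective (hs : Function.Injective s) :
    MvPolynomial τ (MvPolynomial ↥(Set.range s)ᶜ k) ≃+* MvPolynomial υ k := by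
  classical
  exact ((sumAlgEquiv k τ _).symm.trans (renameEquiv k
    (((Equiv.ofInjective s hs).sumCongr (Equiv.refl _)).trans
      (Equiv.Set.sumCompl (Set.range s))))).toRingEquiv

theorem iteratedEquivOfInjective_X (hs : Function.Injective s) (c : τ) :
    iteratedEquivOfInjective k hs (X c) = X (s c) := by
  simp [iteratedEquivOfInjective]

theorem iteratedEquivOfInjective_C (hs : Function.Injective s)
    (p : MvPolynomial ↥(Set.range s)ᶜ k) :
    iteratedEquivOfInjective k hs (C p) = rename Subtype.val p := by
  suffices h : (iteratedEquivOfInjective k hs).toRingHom.comp C =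
      (rename Subtype.val).toRingHom from RingHom.congr_fun h p
  refine ringHom_ext (fun a => ?_) fun c => ?_ <;> simp [iteratedEquivOfInjective]

theorem baseInclusion_iteratedEquivOfInjective {σ ι : Type*} {s : ι × σ → υ}
    (hs : Function.Injective s) (p : MvPolynomial σ (MvPolynomial ↥(Set.range s)ᶜ k)) :
    baseInclusion (iteratedEquivOfInjective k hs) p =
      map (rename Subtype.val : _ →ₐ[k] MvPolynomial υ k).toRingHom p := by
  rw [baseInclusion]
  congr 2
  exact RingHom.ext (iteratedEquivOfInjective_C hs)

end IteratedEquiv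

section GenericForm

variable {k σ ι : Type*} [CommRing k] {d : ι → ℕ}

/-- The indices of the coefficient indeterminates `U_{j,α}`, `|α| = d j`, of a family of generic
forms of degrees `d j`. It specializes to `CoefIdx`. -/
abbrev FormIdx (σ : Type*) {ι : Type*} (d : ι → ℕ) : Type _ :=
  Σ j : ι, {α : σ →₀ ℕ // (α.sum fun _ e => e) = d j}

/-- The index of the coefficient of `xᵢ ^ (d j - 1) * xᵣ` in the generic form of degree `d j`. -/
noncomputable def linearIdx (hd : ∀ j, 0 < d j) (i : σ) (c : ι × σ) : FormIdx σ d :=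
  ⟨c.1, Finsupp.single i (d c.1 - 1) + Finsupp.single c.2 1, by
    rw [Finsupp.sum_add_index' (fun _ => rfl) (fun _ _ _ => rfl), Finsupp.sum_single_index rfl,
      Finsupp.sum_single_index rfl, Nat.sub_add_cancel (hd c.1)]⟩

theorem linearIdx_exponent_injective (hd : ∀ j, 0 < d j) (i : σ) (j : ι) :
    Function.Injective fun r => (linearIdx hd i (j, r)).2.1 :=
  fun _ _ h => Finsupp.single_left_injective one_ne_zero (add_left_cancel h)

theorem linearIdx_injective (hd : ∀ j, 0 < d j) (i : σ) : Function.Injective (linearIdx hd i) := by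
  rintro ⟨j, r⟩ ⟨j', s⟩ h
  obtain rfl : j = j' := congrArg Sigma.fst h
  rw [linearIdx_exponent_injective hd i j (congrArg (fun c => c.2.1) h)]

variable [Fintype σ] [DecidableEq σ]

variable (k) in
/-- The generic form `∑ U_{j,α} x^α` of degree `d j`, the sum being over `|α| = d j`. It
specializes to `genF`. -/
noncomputable def genericForm (d : ι → ℕ) (j : ι) :
    MvPolynomial σ (MvPolynomial (FormIdx σ d) k) :=
  ∑ α ∈ (Finset.finsuppAntidiag (Finset.univ : Finset σ) (d j)).attach,
    monomial α.1 (X ⟨j, ⟨α.1, (Finset.mem_finsuppAntidiag'.mp α.2).1⟩⟩)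

theorem isHomogeneous_genericForm (j : ι) :
    (genericForm k d j : MvPolynomial σ _).IsHomogeneous (d j) :=
  IsHomogeneous.sum _ _ _ fun α _ =>
    isHomogeneous_monomial _ (Finset.mem_finsuppAntidiag'.mp α.2).1

theorem coeff_genericForm {j : ι} {α : σ →₀ ℕ} (hα : (α.sum fun _ e => e) = d j) :
    coeff α (genericForm k d j) = X ⟨j, α, hα⟩ := by
  have hmem : α ∈ Finset.finsuppAntidiag Finset.univ (d j) :=
    Finset.mem_finsuppAntidiag'.2 ⟨hα, Finset.subset_univ _⟩
  rw [genericForm, coeff_sum, Finset.sum_eq_single_of_mem ⟨α, hmem⟩ (Finset.mem_attach _ _)]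
  · rw [coeff_monomial, if_pos rfl]
  · exact fun β _ hβ => by rw [coeff_monomial, if_neg fun h => hβ (Subtype.ext h)]

theorem genericForm_eq_genericPerturbation (hd : ∀ j, 0 < d j) (i : σ) :
    genericForm k d = genericPerturbation (iteratedEquivOfInjective k (linearIdx_injective hd i))
      (fun j => map (killCompl Subtype.val_injective).toRingHom (genericForm k d j))
      (fun j => d j - 1) i := by
  funext j
  have hlinear (r : σ) : X i ^ (d j - 1) * (C (X (linearIdx hd i (j, r))) * X r) =
      monomial (linearIdx hd i (j, r)).2.1 (X (R := k) (linearIdx hd i (j, r))) := by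
    rw [X_pow_eq_monomial, C_mul_X_eq_monomial, monomial_mul, one_mul]
    rfl
  ext1 α
  simp only [genericPerturbation, iteratedEquivOfInjective_X, Finset.mul_sum, hlinear, coeff_add,
    coeff_sum, coeff_monomial, baseInclusion_iteratedEquivOfInjective, coeff_map,
    AlgHom.toRingHom_eq_coe, RingHom.coe_coe]
  by_cases hα : ∃ r, (linearIdx hd i (j, r)).2.1 = α
  · obtain ⟨r, rfl⟩ := hα
    have hcoeff : coeff (linearIdx hd i (j, r)).2.1 (genericForm k d j) =
        X (linearIdx hd i (j, r)) := coeff_genericForm (linearIdx hd i (j, r)).2.2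
    have hkill := killCompl_X_eq_zero (k := k) (c := linearIdx hd i (j, r))
      (Subtype.val_injective (p := (· ∈ (Set.range (linearIdx hd i))ᶜ))) (by simp)
    rw [Fintype.sum_eq_single r fun r' hr' =>
      if_neg fun h => hr' (linearIdx_exponent_injective hd i j h), if_pos rfl, hcoeff, hkill,
      map_zero, zero_add]
  · rw [Finset.sum_eq_zero fun r _ => if_neg fun h => hα ⟨r, h⟩, add_zero]
    by_cases hdeg : (α.sum fun _ e => e) = d j
    · rw [coeff_genericForm hdeg, rename_killCompl_X]
      rw [Subtype.range_coe, Set.mem_compl_iff]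
      rintro ⟨⟨j', r⟩, h⟩
      obtain rfl : j' = j := congrArg Sigma.fst h
      exact hα ⟨r, congrArg (fun c => c.2.1) h⟩
    · rw [(isHomogeneous_genericForm j).coeff_eq_zero hdeg, map_zero, map_zero]

theorem B_localization_isDomain_general (k : Type*) [CommRing k] [IsDomain k] {σ ι : Type*}
    [Fintype σ] [DecidableEq σ] (d : ι → ℕ) (hd : ∀ j, 0 < d j) (i : σ) :
    IsDomain (Localization.Away
      (Ideal.Quotient.mk (degeneracyIdeal (genericForm k d)) (X i))) := by
  have hhom (j) := isHomogeneous_genericForm (k := k) (d := d) (σ := σ) j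
  rw [genericForm_eq_genericPerturbation hd i] at hhom ⊢
  exact isDomain_localizationAway_degeneracyIdeal hhom

end GenericForm

theorem Dideal_eq_degeneracyIdeal (k : Type*) [CommRing k] (d : Fin 2 → ℕ) :
    Dideal k d = degeneracyIdeal (genF k d) := by
  refine eq_of_forall_ge_iff fun I => ?_
  let Φ := Ideal.Quotient.mk I
  have hminor (r s) : Jmin k d r s ∈ I ↔
      (jacobianMatrix (genF k d)).map Φ 0 r * (jacobianMatrix (genF k d)).map Φ 1 s =
        (jacobianMatrix (genF k d)).map Φ 0 s * (jacobianMatrix (genF k d)).map Φ 1 r := by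
    simp only [← Ideal.Quotient.eq_zero_iff_mem, Jmin, map_sub, map_mul, sub_eq_zero, Φ,
      jacobianMatrix, Matrix.map_apply, Matrix.of_apply]
  nth_rw 2 [← Ideal.mk_ker (I := I)]
  rw [degeneracyIdeal_le_ker_iff, vanishingTwoMinors_fin_two_iff, Fin.forall_fin_two,
    Dideal, Ideal.span_le, Set.union_subset_iff, Set.pair_subset_iff]
  simp only [← hminor, Φ, Ideal.Quotient.eq_zero_iff_mem, SetLike.mem_coe]
  refine and_congr_right fun _ => ⟨fun h r s hrs => h ⟨r, s, hrs, rfl⟩, ?_⟩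
  rintro h _ ⟨r, s, hrs, rfl⟩
  exact h r s hrs

/-- **Proposition.** If `k` is a domain then for each `i`, the localization `B_{x_i}`
of `B = C/𝒟` at the powers of the image of `x_i` is an integral domain. -/
theorem B_localization_isDomain (k : Type*) [CommRing k] [IsDomain k] (d : Fin 2 → ℕ)
    (hd : ∀ i, 0 < d i) (i : Fin 4) :
    IsDomain (Localization.Away
      (Ideal.Quotient.mk (Dideal k d) (X i : Cring k d))) := by
  rw [Dideal_eq_degeneracyIdeal]
  exact B_localization_isDomain_general k d hd i
end

section
/- Assume k is a unique factorization domain and d₁ + d₂ ≥ 3. Then the ideal 𝔓 = T_𝔪(𝒟) ∩ A (the defining ideal of the discriminant scheme of the generic complete intersection curve of bidegree (d₁,d₂) in ℙ³) is a principal ideal of A generated by an irreducible element of A. -/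
set_option maxSynthPendingDepth 3

open MvPolynomial

/-- The maximal graded ideal `𝔪 = (x₁,x₂,x₃,x₄) ⊂ C`. -/
noncomputable def mIdeal (k : Type*) [CommRing k] (d : Fin 2 → ℕ) : Ideal (Cring k d) :=
  Ideal.span (Set.range (X : Fin 4 → Cring k d))

/-! Geometrically, `𝔓` is the ideal of the image of the incidence variety of all `(p, f₁, f₂)` with
`p` a singular point of `f₁ = f₂ = 0`. On the chart `x_t = 1`, translating `p` to the coordinate
point `e_t` makes the coefficients of the `x_t ^ d i` vanish and the linear coefficients form a
matrix of rank at most one; a matrix of the form (row `b`, row `e * b`) is generic among these.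
Hence `𝔓` is the kernel of a homomorphism from `A` to a polynomial ring, and so a prime ideal. It is
nonzero, since the target has one variable fewer than `A`.

If `2 ≤ d i`, then `𝔓` contains no nonzero polynomial free of the coefficient of `x_t ^ d i` in the
`i`-th form: near the pair `x_t ^ (d j - 1) * x_r`, `x_t ^ (d i - 2) * x_s * x_u`, all the other
coefficients of a singular pair can be prescribed to first order, that is, a specialisation of this
homomorphism is, up to constants and modulo squares, the identity on the polynomial ring in them,
and such an endomorphism is injective. Finally, a nonzero prime ideal of `B[X]`, with `B` a unique
factorisation domain, which contracts to `0` in `B` is generated by an irreducible element, as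
localising shows: it extends to a nonzero prime ideal of `Frac(B)[X]`. -/

section Factoriality

theorem exists_irreducible_eq_span_of_disjoint {R : Type*} [CommRing R] [IsDomain R]
    [UniqueFactorizationMonoid R] (M : Submonoid R) (S : Type*) [CommRing S] [IsDomain S]
    [Ring.DimensionLEOne S] [Algebra R S] [IsLocalization M S] {q : Ideal R} [hq : q.IsPrime]
    (hq0 : q ≠ ⊥) (hM : Disjoint (M : Set R) q) :
    ∃ P : R, Irreducible P ∧ q = Ideal.span {P} := by
  obtain ⟨P, hPq, hP⟩ := hq.exists_mem_prime_of_ne_bot hq0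
  have hle : Ideal.span {P} ≤ q := (Ideal.span_singleton_le_iff_mem q).2 hPq
  have hspan : (Ideal.span {P}).IsPrime := (Ideal.span_singleton_prime hP.ne_zero).2 hP
  have hMP : Disjoint (M : Set R) (Ideal.span {P} : Ideal R) := hM.mono_right hle
  have hmapq := IsLocalization.isPrime_of_isPrime_disjoint M S q hq hM
  have hmapP := IsLocalization.isPrime_of_isPrime_disjoint M S _ hspan hMP
  have hM0 : M ≤ nonZeroDivisors R :=
    le_nonZeroDivisors_of_noZeroDivisors fun h0 ↦ Set.disjoint_left.1 hM h0 q.zero_mem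
  have hmapP0 : (Ideal.span {P}).map (algebraMap R S) ≠ ⊥ := by
    rw [Ne, Ideal.map_eq_bot_iff_of_injective (IsLocalization.injective S hM0),
      Ideal.span_singleton_eq_bot]
    exact hP.ne_zero
  have heq := (hmapP.isMaximal hmapP0).eq_of_le hmapq.ne_top (Ideal.map_mono hle)
  refine ⟨P, hP.irreducible, ?_⟩
  rw [← IsLocalization.under_map_of_isPrime_disjoint M S hq hM, ← heq,
    IsLocalization.under_map_of_isPrime_disjoint M S hspan hMP]

attribute [local instance] Polynomial.algebra Polynomial.isLocalization in
theorem exists_irreducible_eq_span_of_comap_C_eq_bot {B : Type*} [CommRing B] [IsDomain B]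
    [UniqueFactorizationMonoid B] {q : Ideal (Polynomial B)} [q.IsPrime] (hq0 : q ≠ ⊥)
    (hq : q.comap Polynomial.C = ⊥) :
    ∃ P : Polynomial B, Irreducible P ∧ q = Ideal.span {P} := by
  refine exists_irreducible_eq_span_of_disjoint
    ((nonZeroDivisors B).map Polynomial.C) (Polynomial (FractionRing B)) hq0 ?_
  rw [Set.disjoint_left]
  rintro _ ⟨b, hb, rfl⟩ hbq
  have : b ∈ q.comap Polynomial.C := hbq
  rw [hq, Ideal.mem_bot] at this
  exact nonZeroDivisors.ne_zero hb this

theorem optionEquivLeft_symm_C {σ k : Type*} [CommRing k] (b : MvPolynomial σ k) :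
    (optionEquivLeft k σ).symm (Polynomial.C b) = rename some b := by
  rw [AlgEquiv.symm_apply_eq]
  induction b using MvPolynomial.induction_on with
  | C a => simp
  | add p q hp hq => simp [← hp, ← hq]
  | mul_X p n hp => simp [← hp]

theorem exists_irreducible_eq_span_of_comap_rename_eq_bot {σ k : Type*} [CommRing k] [IsDomain k]
    [UniqueFactorizationMonoid k] (a : σ) {q : Ideal (MvPolynomial σ k)} [q.IsPrime] (hq0 : q ≠ ⊥)
    (hq : q.comap (rename (Subtype.val : {b // b ≠ a} → σ) : _ →ₐ[k] MvPolynomial σ k) = ⊥) :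
    ∃ P : MvPolynomial σ k, Irreducible P ∧ q = Ideal.span {P} := by
  classical
  let e : Polynomial (MvPolynomial {b // b ≠ a} k) ≃ₐ[k] MvPolynomial σ k :=
    (optionEquivLeft k _).symm.trans (renameEquiv k (Equiv.optionSubtypeNe a))
  have he (b : MvPolynomial {b // b ≠ a} k) : e (Polynomial.C b) = rename Subtype.val b := by
    simp only [e, AlgEquiv.trans_apply, optionEquivLeft_symm_C, renameEquiv_apply, rename_rename]
    rfl
  have hmap : (q.comap e).map e = q := Ideal.map_comap_of_surjective e e.surjective q
  have hqe0 : q.comap e ≠ ⊥ := by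
    intro h
    rw [h, Ideal.map_bot] at hmap
    exact hq0 hmap.symm
  have hqeC : (q.comap e).comap Polynomial.C = ⊥ := by
    rw [← hq]
    ext b
    simp only [Ideal.mem_comap, he]
  obtain ⟨P, hP, hqP⟩ := exists_irreducible_eq_span_of_comap_C_eq_bot hqe0 hqeC
  refine ⟨e P, (MulEquiv.irreducible_iff e).2 hP, ?_⟩
  rw [← hmap, hqP, Ideal.map_span, Set.image_singleton]

end Factoriality

section CongruentToIdentity

variable {R : Type*} [CommRing R] {I : Ideal R} {f : R →+* R}

theorem map_sub_self_mem_sq_of_mem_span {s : Set R} (hs : Ideal.span s = I)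
    (hf : ∀ a, f a - a ∈ I) (hfs : ∀ x ∈ s, f x - x ∈ I ^ 2) {b : R} (hb : b ∈ I) :
    f b - b ∈ I ^ 2 := by
  rw [← hs] at hb
  induction hb using Submodule.span_induction with
  | mem x hx => exact hfs x hx
  | zero => simp
  | add x y _ _ hx hy =>
    rw [map_add, add_sub_add_comm]
    exact add_mem hx hy
  | smul a x hx hfx =>
    have hxI : x ∈ I := hs ▸ hx
    rw [smul_eq_mul, map_mul, show f a * f x - a * x = f a * (f x - x) + (f a - a) * x by ring]
    exact add_mem (Ideal.mul_mem_left _ _ hfx) (sq I ▸ Ideal.mul_mem_mul (hf a) hxI)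

theorem map_sub_self_mem_pow_succ (hf : ∀ a, f a - a ∈ I) (hfI : ∀ b ∈ I, f b - b ∈ I ^ 2)
    {n : ℕ} {a : R} (ha : a ∈ I ^ n) : f a - a ∈ I ^ (n + 1) := by
  have hfpow {n : ℕ} {a : R} (ha : a ∈ I ^ n) : f a ∈ I ^ n := by
    have hle : I.map f ≤ I := Ideal.map_le_iff_le_comap.2 fun b hb ↦ by
      simpa using add_mem (hf b) hb
    exact Ideal.pow_right_mono hle n (Ideal.map_pow f I n ▸ Ideal.mem_map_of_mem f ha)
  induction n generalizing a with
  | zero => simpa using hf a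
  | succ n ih =>
    rw [pow_succ'] at ha
    induction ha using Submodule.mul_induction_on' with
    | mem_mul_mem b hb c hc =>
      rw [map_mul, show f b * f c - b * c = (f b - b) * f c + b * (f c - c) by ring]
      refine add_mem ?_ (pow_succ' I (n + 1) ▸ Ideal.mul_mem_mul hb (ih hc))
      rw [show n + 1 + 1 = 2 + n by ring, pow_add]
      exact Ideal.mul_mem_mul (hfI b hb) (hfpow hc)
    | add x _ y _ hx hy =>
      rw [map_add, add_sub_add_comm]
      exact add_mem hx hy

end CongruentToIdentity

section InverseFunction

variable {R σ : Type*} [CommRing R]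

theorem aeval_injective_of_sub_X_mem_sq {F : σ → MvPolynomial σ R}
    (hF : ∀ i, F i - X i ∈ idealOfVars σ R ^ 2) :
    Function.Injective (aeval F : MvPolynomial σ R → MvPolynomial σ R) := by
  set I := idealOfVars σ R
  let f : MvPolynomial σ R →+* MvPolynomial σ R := (aeval F : _ →ₐ[R] _)
  have hf (a : MvPolynomial σ R) : f a - a ∈ I := by
    have : (Ideal.Quotient.mkₐ R I).comp (aeval F) = Ideal.Quotient.mkₐ R I :=
      algHom_ext fun i ↦ by
        simpa using Ideal.Quotient.eq.2 (Ideal.pow_le_self two_ne_zero (hF i))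
    exact Ideal.Quotient.eq.1 (DFunLike.congr_fun this a)
  have hfI (b : MvPolynomial σ R) (hb : b ∈ I) : f b - b ∈ I ^ 2 :=
    map_sub_self_mem_sq_of_mem_span rfl hf (by rintro _ ⟨i, rfl⟩; simpa [f] using hF i) hb
  refine (injective_iff_map_eq_zero f).2 fun a ha ↦ ?_
  have hmem (n : ℕ) : a ∈ I ^ n := by
    induction n with
    | zero => simp
    | succ n ih => simpa [ha] using map_sub_self_mem_pow_succ hf hfI ih
  ext m
  simpa using (mem_pow_idealOfVars_iff' (m.degree + 1) a).1 (hmem _) m (Nat.lt_succ_self _)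

theorem aeval_X_add_C_injective (c : σ → R) :
    Function.Injective (aeval fun i ↦ X i + C (c i) : MvPolynomial σ R → MvPolynomial σ R) := by
  have hinv : (aeval fun i ↦ X i - C (c i)).comp (aeval fun i ↦ X i + C (c i)) =
      AlgHom.id R (MvPolynomial σ R) := algHom_ext fun i ↦ by simp [algHom_C]
  refine Function.Injective.of_comp (f := aeval fun i ↦ X i - C (c i)) ?_
  rw [← AlgHom.coe_comp, hinv]
  exact Function.injective_id

theorem aeval_injective_of_sub_X_sub_C_mem_sq {F : σ → MvPolynomial σ R} {c : σ → R}
    (hF : ∀ i, F i - X i - C (c i) ∈ idealOfVars σ R ^ 2) :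
    Function.Injective (aeval F : MvPolynomial σ R → MvPolynomial σ R) := by
  have hcomp : (aeval F : MvPolynomial σ R →ₐ[R] MvPolynomial σ R) =
      (aeval fun i ↦ F i - C (c i)).comp (aeval fun i ↦ X i + C (c i)) :=
    algHom_ext fun i ↦ by simp [algHom_C]
  rw [hcomp, AlgHom.coe_comp]
  refine (aeval_injective_of_sub_X_mem_sq fun i ↦ ?_).comp (aeval_X_add_C_injective c)
  simpa only [sub_right_comm] using hF i

end InverseFunction

section RankOne

variable {ι κ : Type*}

theorem prod_map_eq_of_map_fst_eq_of_map_snd_eq {M : Type*} [CommMonoid M] {x : ι × κ → M}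
    (hx : ∀ i j r s, x (i, r) * x (j, s) = x (i, s) * x (j, r)) {s s' : Multiset (ι × κ)}
    (hfst : s.map Prod.fst = s'.map Prod.fst) (hsnd : s.map Prod.snd = s'.map Prod.snd) :
    (s.map x).prod = (s'.map x).prod := by
  induction s using Multiset.induction_on generalizing s' with
  | empty =>
    rw [Multiset.map_zero, eq_comm, Multiset.map_eq_zero] at hfst
    rw [hfst]
  | cons p s ih =>
    obtain ⟨i, r⟩ := p
    suffices ∃ t : Multiset (ι × κ), s'.map Prod.fst = i ::ₘ t.map Prod.fst ∧
        s'.map Prod.snd = r ::ₘ t.map Prod.snd ∧ (s'.map x).prod = x (i, r) * (t.map x).prod by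
      obtain ⟨t, ht₁, ht₂, ht⟩ := this
      rw [ht₁, Multiset.map_cons, Multiset.cons_inj_right] at hfst
      rw [ht₂, Multiset.map_cons, Multiset.cons_inj_right] at hsnd
      rw [Multiset.map_cons, Multiset.prod_cons, ih hfst hsnd, ht]
    have hi : i ∈ s'.map Prod.fst := by simp [← hfst]
    have hr : r ∈ s'.map Prod.snd := by simp [← hsnd]
    obtain ⟨⟨_, r'⟩, hir', rfl⟩ := Multiset.mem_map.1 hi
    obtain ⟨⟨i', _⟩, hi'r, rfl⟩ := Multiset.mem_map.1 hr
    obtain ⟨t, rfl⟩ := Multiset.exists_cons_of_mem hir'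
    rcases Multiset.mem_cons.1 hi'r with heq | hmem
    · obtain ⟨rfl, rfl⟩ := Prod.mk.inj heq
      exact ⟨t, by simp⟩
    · obtain ⟨t, rfl⟩ := Multiset.exists_cons_of_mem hmem
      refine ⟨(i', r') ::ₘ t, by simp, by simp [Multiset.cons_swap], ?_⟩
      simp only [Multiset.map_cons, Multiset.prod_cons, ← mul_assoc, hx _ i' r' _]

theorem aeval_monomial_one_monomial {σ τ K : Type*} [CommSemiring K] (e : σ → τ →₀ ℕ)
    (m : σ →₀ ℕ) (a : K) :
    aeval (fun i ↦ monomial (e i) (1 : K)) (monomial m a) =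
      monomial (Finsupp.linearCombination ℕ e m) a := by
  simp only [aeval_monomial, algebraMap_eq, monomial_pow, one_pow, Finsupp.linearCombination_apply,
    monomial_finsupp_sum_index]

theorem eval₂_eq_zero_of_aeval_monomial_eq_zero {σ τ K Q : Type*} [CommSemiring K]
    [CommSemiring Q] (g : K →+* Q) {y : σ → Q} {e : σ → τ →₀ ℕ}
    (hy : ∀ m m' : σ →₀ ℕ, Finsupp.linearCombination ℕ e m = Finsupp.linearCombination ℕ e m' →
      (m.prod fun i n ↦ y i ^ n) = m'.prod fun i n ↦ y i ^ n)
    {p : MvPolynomial σ K} (hp : aeval (fun i ↦ monomial (e i) (1 : K)) p = 0) :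
    eval₂ g y p = 0 := by
  classical
  obtain ⟨v, hv⟩ : ∃ v : (τ →₀ ℕ) → Q, ∀ m : σ →₀ ℕ,
      (m.prod fun i n ↦ y i ^ n) = v (Finsupp.linearCombination ℕ e m) :=
    ⟨Function.extend (Finsupp.linearCombination ℕ e) _ 0, fun m ↦
      (Function.FactorsThrough.extend_apply (fun m m' h ↦ hy m m' h) 0 m).symm⟩
  have hfiber (n : τ →₀ ℕ) :
      ∑ m ∈ p.support with Finsupp.linearCombination ℕ e m = n, coeff m p = 0 := by
    have := congr_arg (coeff n) hp
    rw [p.as_sum, map_sum, coeff_sum] at this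
    simpa only [aeval_monomial_one_monomial, coeff_monomial, coeff_zero, Finset.sum_filter]
      using this
  have hsum : eval₂ g y p =
      ∑ m ∈ p.support, g (coeff m p) * v (Finsupp.linearCombination ℕ e m) :=
    Finset.sum_congr rfl fun m _ ↦ by rw [← hv]; rfl
  rw [hsum, ← Finset.sum_fiberwise_of_maps_to fun m hm ↦ Finset.mem_image_of_mem
    (Finsupp.linearCombination ℕ e) hm]
  refine Finset.sum_eq_zero fun n _ ↦ ?_
  rw [Finset.sum_congr rfl fun m hm ↦ by rw [(Finset.mem_filter.1 hm).2], ← Finset.sum_mul,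
    ← map_sum, hfiber, map_zero, zero_mul]

theorem eq_of_degree_eq_of_forall_ne {m m' : ι →₀ ℕ} (hdeg : m.degree = m'.degree) (j : ι)
    (h : ∀ i, i ≠ j → m i = m' i) : m = m' := by
  have herase : m.erase j = m'.erase j := by
    ext i
    by_cases hi : i = j
    · simp [hi]
    · simp [Finsupp.erase_ne hi, h i hi]
  rw [← Finsupp.erase_add_single j m, ← Finsupp.erase_add_single j m', herase]
  rw [← Finsupp.erase_add_single j m, ← Finsupp.erase_add_single j m', herase, map_add, map_add,
    add_right_inj, Finsupp.degree_single, Finsupp.degree_single] at hdeg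
  rw [hdeg]

variable [DecidableEq ι]

/-- The multidegree of the entry `a` of a matrix of rank at most one, written as the entry
`inr a.2` of row `j` times the factor `inl a.1` by which row `a.1` is a multiple of row `j`. -/
noncomputable def rankOneExponent (j : ι) (a : ι × κ) : {i // i ≠ j} ⊕ κ →₀ ℕ :=
  (if h : a.1 ≠ j then Finsupp.single (Sum.inl ⟨a.1, h⟩) 1 else 0) +
    Finsupp.single (Sum.inr a.2) 1

theorem linearCombination_rankOneExponent_inl {j : ι} (m : ι × κ →₀ ℕ) (i : {i // i ≠ j}) :
    Finsupp.linearCombination ℕ (rankOneExponent j) m (Sum.inl i) = m.mapDomain Prod.fst i := by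
  induction m using Finsupp.induction_linear with
  | zero => simp
  | add m m' hm hm' => simp [Finsupp.mapDomain_add, hm, hm']
  | single a n =>
    rcases eq_or_ne a.1 i with h | h
    · simp [rankOneExponent, h, i.2]
    · by_cases ha : a.1 = j
      · simp [rankOneExponent, ha, i.2.symm]
      · simp [rankOneExponent, h, ha, Subtype.ext_iff]

theorem linearCombination_rankOneExponent_inr {j : ι} (m : ι × κ →₀ ℕ) (r : κ) :
    Finsupp.linearCombination ℕ (rankOneExponent j) m (Sum.inr r) = m.mapDomain Prod.snd r := by
  induction m using Finsupp.induction_linear with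
  | zero => simp
  | add m m' hm hm' => simp [Finsupp.mapDomain_add, hm, hm']
  | single a n =>
    by_cases ha : a.1 = j <;> by_cases hr : a.2 = r <;> simp [rankOneExponent, ha, hr]

theorem mapDomain_eq_of_linearCombination_rankOneExponent_eq {j : ι} {m m' : ι × κ →₀ ℕ}
    (h : Finsupp.linearCombination ℕ (rankOneExponent j) m =
      Finsupp.linearCombination ℕ (rankOneExponent j) m') :
    m.mapDomain Prod.fst = m'.mapDomain Prod.fst ∧
      m.mapDomain Prod.snd = m'.mapDomain Prod.snd := by
  have hsnd : m.mapDomain Prod.snd = m'.mapDomain Prod.snd := by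
    ext r
    rw [← linearCombination_rankOneExponent_inr (j := j), h, linearCombination_rankOneExponent_inr]
  refine ⟨eq_of_degree_eq_of_forall_ne ?_ j fun i hi ↦ ?_, hsnd⟩
  · simpa only [Finsupp.degree_mapDomain] using congr_arg Finsupp.degree hsnd
  · rw [← linearCombination_rankOneExponent_inl m ⟨i, hi⟩, h, linearCombination_rankOneExponent_inl]

variable (κ)

/-- The parametrisation of the matrices of rank at most one whose row `j` spans the row space:
`X (inr r)` are the entries of row `j` and `X (inl i)` the multiple of it which is row `i`. -/
noncomputable def rankOneMap (K : Type*) [CommSemiring K] (j : ι) :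
    MvPolynomial (ι × κ) K →ₐ[K] MvPolynomial ({i // i ≠ j} ⊕ κ) K :=
  aeval fun a ↦ monomial (rankOneExponent j a) 1

variable {κ} {K : Type*} [CommSemiring K]

theorem rankOneMap_X_self (j : ι) (r : κ) : rankOneMap κ K j (X (j, r)) = X (Sum.inr r) := by
  rw [rankOneMap, aeval_X]
  simp [rankOneExponent, X]

theorem rankOneMap_X_of_ne {i j : ι} (h : i ≠ j) (r : κ) :
    rankOneMap κ K j (X (i, r)) = X (Sum.inl ⟨i, h⟩) * X (Sum.inr r) := by
  rw [rankOneMap, aeval_X]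
  simp [rankOneExponent, X, h, monomial_mul]

theorem rankOneMap_X_mul_rankOneMap_X (j i i' : ι) (r s : κ) :
    rankOneMap κ K j (X (i, r)) * rankOneMap κ K j (X (i', s)) =
      rankOneMap κ K j (X (i, s)) * rankOneMap κ K j (X (i', r)) := by
  simp only [rankOneMap, aeval_X, monomial_mul, rankOneExponent]
  rw [add_add_add_comm, add_comm (Finsupp.single (Sum.inr r) 1), add_add_add_comm]

theorem eval₂_eq_zero_of_rankOneMap_eq_zero {Q : Type*} [CommSemiring Q] (g : K →+* Q)
    {x : ι × κ → Q} (hx : ∀ i j r s, x (i, r) * x (j, s) = x (i, s) * x (j, r)) {j : ι}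
    {p : MvPolynomial (ι × κ) K} (hp : rankOneMap κ K j p = 0) : eval₂ g x p = 0 := by
  refine eval₂_eq_zero_of_aeval_monomial_eq_zero g (fun m m' hmm' ↦ ?_) hp
  obtain ⟨hfst, hsnd⟩ := mapDomain_eq_of_linearCombination_rankOneExponent_eq hmm'
  have hprod (m : ι × κ →₀ ℕ) :
      (m.prod fun a n ↦ x a ^ n) = ((Finsupp.toMultiset m).map x).prod := by
    rw [Finsupp.toMultiset_map, Finsupp.prod_toMultiset, Finsupp.prod_mapDomain_index] <;>
      simp [pow_add]
  rw [hprod, hprod]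
  apply prod_map_eq_of_map_fst_eq_of_map_snd_eq hx <;>
    simp only [Finsupp.toMultiset_map, hfst, hsnd]

end RankOne

section Homogeneous

variable {σ S : Type*} [CommRing S] {F : MvPolynomial σ S} {n : ℕ}

theorem degree_eq_of_mem_support (hF : F.IsHomogeneous n) {m : σ →₀ ℕ} (hm : m ∈ F.support) :
    m.degree = n := by
  rw [Finsupp.degree_eq_weight_one]
  exact hF (mem_support_iff.1 hm)

theorem eval_smul_of_isHomogeneous (hF : F.IsHomogeneous n) (a : S)
    (x : σ → S) : eval (a • x) F = a ^ n * eval x F := by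
  rw [eval_eq, eval_eq, Finset.mul_sum]
  refine Finset.sum_congr rfl fun m hm ↦ ?_
  simp only [Pi.smul_apply, smul_eq_mul, mul_pow, Finset.prod_mul_distrib,
    Finset.prod_pow_eq_pow_sum, ← Finsupp.degree_apply, degree_eq_of_mem_support hF hm]
  ring

theorem eval_single_of_isHomogeneous [DecidableEq σ] (hF : F.IsHomogeneous n) (t : σ) :
    eval (Pi.single t 1) F = coeff (Finsupp.single t n) F := by
  rw [eval_eq, Finset.sum_eq_single (Finsupp.single t n)]
  · rw [Finset.prod_eq_one, mul_one]
    intro r hr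
    obtain rfl : r = t := Finset.mem_singleton.1 (Finsupp.support_single_subset hr)
    rw [Pi.single_eq_same, one_pow]
  · intro m hm hne
    obtain ⟨r, hr, hrt⟩ : ∃ r ∈ m.support, r ≠ t := by
      by_contra! h
      obtain ⟨e, rfl⟩ := Finsupp.support_subset_singleton'.1
        fun r hr ↦ Finset.mem_singleton.2 (h r hr)
      rw [← degree_eq_of_mem_support hF hm, Finsupp.degree_single] at hne
      exact hne rfl
    rw [Finset.prod_eq_zero hr, mul_zero]
    rw [Pi.single_eq_of_ne hrt, zero_pow (Finsupp.mem_support_iff.1 hr)]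
  · intro h
    rw [notMem_support_iff.1 h, zero_mul]

theorem eval_single_pderiv_of_isHomogeneous [DecidableEq σ] (hF : F.IsHomogeneous n) {r t : σ}
    (hr : r ≠ t) :
    eval (Pi.single t 1) (pderiv r F) =
      coeff (Finsupp.single t (n - 1) + Finsupp.single r 1) F := by
  rw [eval_single_of_isHomogeneous hF.pderiv, coeff_pderiv]
  simp [Finsupp.single_eq_of_ne hr]

theorem eval_smul_map_of_isHomogeneous {Q : Type*} [CommRing Q] (hF : F.IsHomogeneous n)
    (g : MvPolynomial σ S →+* Q) (a : Q) :
    eval (a • g ∘ X) (map (g.comp C) F) = a ^ n * g F := by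
  have hg : (eval (g ∘ X)).comp (map (g.comp C)) = g := by
    ext <;> simp
  rw [eval_smul_of_isHomogeneous (hF.map _), ← RingHom.comp_apply, hg]

end Homogeneous

section ChartShift

variable {σ S : Type*} [CommRing S] {t : σ} {q : σ → S}

/-- The substitution `x_r ↦ x_r + q_r x_t`. If `q t = 0`, it is the linear change of coordinates
moving the coordinate point `e_t` to the point `e_t + q` of the affine chart `x_t = 1`. -/
noncomputable def chartShift (t : σ) (q : σ → S) : MvPolynomial σ S →ₐ[S] MvPolynomial σ S :=
  aeval fun r ↦ X r + C (q r) * X t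

@[simp]
theorem chartShift_X (r : σ) : chartShift t q (X r) = X r + C (q r) * X t :=
  aeval_X _ r

theorem chartShift_neg_chartShift (hq : q t = 0) (F : MvPolynomial σ S) :
    chartShift t (-q) (chartShift t q F) = F := by
  have : (chartShift t (-q)).comp (chartShift t q) = AlgHom.id S _ :=
    algHom_ext fun r ↦ by simp [algHom_C, hq]
  exact DFunLike.congr_fun this F

theorem eval_single_chartShift [DecidableEq σ] (F : MvPolynomial σ S) :
    eval (Pi.single t 1) (chartShift t q F) = eval (Pi.single t 1 + q) F := by
  have : (aeval (Pi.single t 1)).comp (chartShift t q) = aeval (R := S) (Pi.single t 1 + q) :=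
    algHom_ext fun r ↦ by simp
  simpa using DFunLike.congr_fun this F

theorem map_chartShift {S' : Type*} [CommRing S'] (g : S →+* S') (F : MvPolynomial σ S) :
    map g (chartShift t q F) = chartShift t (g ∘ q) (map g F) := by
  induction F using MvPolynomial.induction_on with
  | C a => simp [algHom_C]
  | add F G hF hG => simp [hF, hG]
  | mul_X F r hF => simp [hF]

theorem pderiv_chartShift {r : σ} (hr : r ≠ t) (F : MvPolynomial σ S) :
    pderiv r (chartShift t q F) = chartShift t q (pderiv r F) := by
  classical
  induction F using MvPolynomial.induction_on with
  | C a => simp [algHom_C]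
  | add F G hF hG => simp [hF, hG]
  | mul_X F s hF => simp [hF, pderiv_X, Pi.single_apply, hr.symm, apply_ite (chartShift t q)]

theorem isHomogeneous_chartShift {F : MvPolynomial σ S} {n : ℕ} (hF : F.IsHomogeneous n) :
    (chartShift t q F).IsHomogeneous n := by
  have hlin (r : σ) : (X r + C (q r) * X t).IsHomogeneous 1 :=
    (isHomogeneous_X S r).add ((isHomogeneous_X S t).C_mul _)
  simpa only [one_mul, chartShift] using hF.aeval _ hlin

end ChartShift

section Minors

theorem mul_eq_mul_of_sum_eq_zero {ι σ S : Type*} [Fintype σ] [CommRing S] {z : σ → S}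
    {a : ι → σ → S} {t : σ} (hz : z t = 1) (ha : ∀ i, ∑ r, z r * a i r = 0)
    (h : ∀ i j r s, r ≠ t → s ≠ t → a i r * a j s = a i s * a j r) (i j : ι) (r s : σ) :
    a i r * a j s = a i s * a j r := by
  have ht (i j : ι) {s : σ} (hs : s ≠ t) : a i t * a j s = a i s * a j t := by
    have hsum : ∑ r, z r * (a i r * a j s - a i s * a j r) = 0 := by
      calc
        _ = (∑ r, z r * a i r) * a j s - a i s * ∑ r, z r * a j r := by
          rw [Finset.sum_mul, Finset.mul_sum, ← Finset.sum_sub_distrib]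
          exact Finset.sum_congr rfl fun r _ ↦ by ring
        _ = 0 := by rw [ha, ha, zero_mul, mul_zero, sub_zero]
    rw [Finset.sum_eq_single t (fun r _ hr ↦ by rw [h i j r s hr hs, sub_self, mul_zero])
      (fun ht ↦ absurd (Finset.mem_univ t) ht), hz, one_mul] at hsum
    exact sub_eq_zero.1 hsum
  by_cases hr : r = t <;> by_cases hs : s = t
  · rw [hr, hs]
  · rw [hr, ht i j hs]
  · rw [hs, ht i j hr]
  · exact h i j r s hr hs

end Minors

section Localization

theorem exists_pow_mul_mem_of_forall_isUnit.{u} {R : Type u} [CommRing R] {I : Ideal R} {x a : R}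
    (h : ∀ (Q : Type u) [CommRing Q] (g : R →+* Q), I ≤ RingHom.ker g → IsUnit (g x) → g a = 0) :
    ∃ ν : ℕ, x ^ ν * a ∈ I := by
  let x' : R ⧸ I := Ideal.Quotient.mk I x
  have ha := h (Localization.Away x')
    ((algebraMap (R ⧸ I) (Localization.Away x')).comp (Ideal.Quotient.mk I))
    (fun b hb ↦ by simp [Ideal.Quotient.eq_zero_iff_mem.2 hb])
    (IsLocalization.Away.algebraMap_isUnit x')
  obtain ⟨⟨_, ν, rfl⟩, hν⟩ := (IsLocalization.map_eq_zero_iff (Submonoid.powers x') _ _).1 ha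
  exact ⟨ν, Ideal.Quotient.eq_zero_iff_mem.1 (by simpa [x'] using hν)⟩

end Localization

section Coefficients

variable {d : Fin 2 → ℕ} {S : Type*} [CommRing S]

instance : Finite (CoefIdx d) := by
  have (i : Fin 2) : Finite {α : Fin 4 →₀ ℕ // (α.sum fun _ e ↦ e) = d i} :=
    (Finsupp.finite_of_degree_eq (d i)).to_subtype
  unfold CoefIdx
  infer_instance

instance : DecidableEq (CoefIdx d) :=
  inferInstanceAs (DecidableEq (Σ i, {α : Fin 4 →₀ ℕ // (α.sum fun _ e ↦ e) = d i}))

/-- The homogeneous polynomial of degree `d i` with coefficients `c ⟨i, α⟩`; the generic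
polynomial `genF` is the case where `c` is the family of the indeterminates. -/
noncomputable def form (c : CoefIdx d → S) (i : Fin 2) : MvPolynomial (Fin 4) S :=
  ∑ α ∈ (Finset.finsuppAntidiag (Finset.univ : Finset (Fin 4)) (d i)).attach,
    monomial α.1 (c ⟨i, α.1, (Finset.mem_finsuppAntidiag'.1 α.2).1⟩)

theorem isHomogeneous_form (c : CoefIdx d → S) (i : Fin 2) : (form c i).IsHomogeneous (d i) :=
  .sum _ _ _ fun α _ ↦ isHomogeneous_monomial _ (Finset.mem_finsuppAntidiag'.1 α.2).1

theorem map_form {S' : Type*} [CommRing S'] (g : S →+* S') (c : CoefIdx d → S) (i : Fin 2) :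
    map g (form c i) = form (g ∘ c) i := by
  simp only [form, map_sum, map_monomial]
  rfl

theorem isHomogeneous_genF {k : Type*} [CommRing k] (i : Fin 2) :
    (genF k d i).IsHomogeneous (d i) :=
  isHomogeneous_form X i

theorem map_genF {k : Type*} [CommRing k] (g : Aring k d →+* S) (i : Fin 2) :
    map g (genF k d i) = form (g ∘ X) i :=
  map_form g X i

theorem coeff_form (c : CoefIdx d → S) (a : CoefIdx d) : coeff a.2.1 (form c a.1) = c a := by
  classical
  have ha : a.2.1 ∈ Finset.finsuppAntidiag (Finset.univ : Finset (Fin 4)) (d a.1) :=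
    Finset.mem_finsuppAntidiag'.2 ⟨a.2.2, Finset.subset_univ _⟩
  rw [form, coeff_sum, Finset.sum_eq_single ⟨a.2.1, ha⟩]
  · exact coeff_monomial _ _ _ |>.trans (if_pos rfl)
  · exact fun α _ hα ↦ (coeff_monomial _ _ _).trans (if_neg fun h ↦ hα (Subtype.ext h))
  · exact fun h ↦ absurd (Finset.mem_attach _ _) h

theorem eq_of_forall_coeff_eq {i : Fin 2} {F G : MvPolynomial (Fin 4) S}
    (hF : F.IsHomogeneous (d i)) (hG : G.IsHomogeneous (d i))
    (h : ∀ a : CoefIdx d, a.1 = i → coeff a.2.1 F = coeff a.2.1 G) : F = G := by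
  ext α
  by_cases hα : α.degree = d i
  · exact h ⟨i, α, hα⟩ rfl
  · rw [hF.coeff_eq_zero hα, hG.coeff_eq_zero hα]

theorem form_coeff {F : Fin 2 → MvPolynomial (Fin 4) S} (hF : ∀ i, (F i).IsHomogeneous (d i))
    (i : Fin 2) : form (fun a : CoefIdx d ↦ coeff a.2.1 (F a.1)) i = F i := by
  refine eq_of_forall_coeff_eq (isHomogeneous_form _ i) (hF i) ?_
  rintro a rfl
  exact coeff_form _ a

theorem coef_ext {c c' : CoefIdx d → S} (h : ∀ i, form c i = form c' i) : c = c' := by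
  funext a
  rw [← coeff_form c, h, coeff_form]

theorem coeff_form_mem {I : Ideal S} {c : CoefIdx d → S} (hc : ∀ a, c a ∈ I) (i : Fin 2)
    (α : Fin 4 →₀ ℕ) : coeff α (form c i) ∈ I := by
  by_cases hα : α.degree = d i
  · exact (coeff_form c ⟨i, α, hα⟩).symm ▸ hc _
  · rw [(isHomogeneous_form c i).coeff_eq_zero hα]
    exact zero_mem I

theorem form_add (c c' : CoefIdx d → S) (i : Fin 2) : form (c + c') i = form c i + form c' i := by
  refine eq_of_forall_coeff_eq (isHomogeneous_form _ i)
    ((isHomogeneous_form c i).add (isHomogeneous_form c' i)) ?_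
  rintro a rfl
  rw [coeff_add, coeff_form, coeff_form, coeff_form, Pi.add_apply]

theorem form_single_self (a : CoefIdx d) (s : S) :
    form (Pi.single a s) a.1 = monomial a.2.1 s := by
  refine eq_of_forall_coeff_eq (isHomogeneous_form _ _) (isHomogeneous_monomial _ a.2.2) ?_
  intro b hb
  calc
    coeff b.2.1 (form (Pi.single a s) a.1) = (Pi.single a s : CoefIdx d → S) b :=
      hb ▸ coeff_form _ b
    _ = if a.2.1 = b.2.1 then s else 0 := by
      rw [Pi.single_apply]
      exact if_congr ⟨fun h ↦ h ▸ rfl, fun h ↦ Sigma.subtype_ext hb h.symm⟩ rfl rfl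
    _ = coeff b.2.1 (monomial a.2.1 s) := (coeff_monomial ..).symm

theorem form_single_of_ne {a : CoefIdx d} {i : Fin 2} (h : a.1 ≠ i) (s : S) :
    form (Pi.single a s) i = 0 := by
  refine eq_of_forall_coeff_eq (isHomogeneous_form _ _) (isHomogeneous_zero ..) ?_
  rintro b rfl
  rw [coeff_form, coeff_zero, Pi.single_eq_of_ne]
  rintro rfl
  exact h rfl

theorem form_single (a : CoefIdx d) (s : S) (i : Fin 2) :
    form (Pi.single a s) i = if a.1 = i then monomial a.2.1 s else 0 := by
  split_ifs with h
  · exact h ▸ form_single_self a s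
  · exact form_single_of_ne h s

/-- The coefficients of the forms with coefficients `c` after the change of coordinates
`chartShift t q`. -/
noncomputable def shiftCoef (t : Fin 4) (q : Fin 4 → S) (c : CoefIdx d → S) (a : CoefIdx d) : S :=
  coeff a.2.1 (chartShift t q (form c a.1))

variable {t : Fin 4} {q : Fin 4 → S} {c : CoefIdx d → S}

theorem form_shiftCoef (i : Fin 2) : form (shiftCoef t q c) i = chartShift t q (form c i) :=
  form_coeff (fun i ↦ isHomogeneous_chartShift (isHomogeneous_form c i)) i

theorem shiftCoef_neg_shiftCoef (hq : q t = 0) : shiftCoef t (-q) (shiftCoef t q c) = c := by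
  funext a
  rw [shiftCoef, form_shiftCoef, chartShift_neg_chartShift hq, coeff_form]

theorem shiftCoef_add (c c' : CoefIdx d → S) :
    shiftCoef t q (c + c') = shiftCoef t q c + shiftCoef t q c' := by
  funext a
  simp only [shiftCoef, form_add, map_add, coeff_add, Pi.add_apply]

theorem comp_shiftCoef {S' : Type*} [CommRing S'] (g : S →+* S') :
    g ∘ shiftCoef t q c = shiftCoef t (g ∘ q) (g ∘ c) := by
  funext a
  rw [Function.comp_apply, shiftCoef, ← coeff_map, map_chartShift, map_form, shiftCoef]

/-- The indices of the coefficients of the monomials of order at least two at the coordinate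
point `e_t`. -/
abbrev HighIdx (d : Fin 2 → ℕ) (t : Fin 4) : Type :=
  {a : CoefIdx d // a.2.1 t + 2 ≤ d a.1}

/-- The index of the coefficient of `x_t ^ (d i - 1) * x_r` in the form of degree `d i`. -/
noncomputable def lowIdx (hd : ∀ i, 0 < d i) (t : Fin 4) (i : Fin 2) (r : Fin 4) : CoefIdx d :=
  ⟨i, Finsupp.single t (d i - 1) + Finsupp.single r 1, by
    change Finsupp.degree _ = _
    rw [map_add, Finsupp.degree_single, Finsupp.degree_single, Nat.sub_add_cancel (hd i)]⟩

variable {hd : ∀ i, 0 < d i}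

theorem lowIdx_injective : Function.Injective fun p : Fin 2 × Fin 4 ↦ lowIdx hd t p.1 p.2 := by
  rintro ⟨i, r⟩ ⟨i', r'⟩ h
  obtain rfl : i = i' := congr_arg Sigma.fst h
  have hexp := congr_arg (fun a : CoefIdx d ↦ a.2.1) h
  obtain rfl : r = r' := Finsupp.single_left_injective one_ne_zero (add_left_cancel hexp)
  rfl

theorem lowIdx_ne_highIdx (i : Fin 2) (r : Fin 4) (a : HighIdx d t) : lowIdx hd t i r ≠ a := by
  intro h
  have ha := a.2
  rw [← h] at ha
  simp only [lowIdx, Finsupp.add_apply, Finsupp.single_eq_same] at ha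
  have := hd i
  omega

theorem exists_lowIdx_eq {a : CoefIdx d} (ha : ¬ a.2.1 t + 2 ≤ d a.1) :
    ∃ r, lowIdx hd t a.1 r = a := by
  obtain ⟨i, α, hα⟩ := a
  change α.degree = d i at hα
  change ¬ α t + 2 ≤ d i at ha
  obtain ⟨β, rfl⟩ := exists_add_of_le (Finsupp.single_le_iff.2 (by omega : d i - 1 ≤ α t))
  rw [map_add, Finsupp.degree_single] at hα
  have hβ : β.degree = 1 := by have := hd i; omega
  obtain ⟨r, rfl⟩ : β ∈ Set.range fun r ↦ Finsupp.single r 1 := by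
    rw [Finsupp.range_single_one]
    exact hβ
  exact ⟨r, rfl⟩

/-- The splitting of the coefficient indices by the order, at most one or at least two, of the
monomial at the coordinate point `e_t`. -/
noncomputable def coefIdxEquiv (hd : ∀ i, 0 < d i) (t : Fin 4) :
    Fin 2 × Fin 4 ⊕ HighIdx d t ≃ CoefIdx d :=
  .ofBijective (Sum.elim (fun p ↦ lowIdx hd t p.1 p.2) Subtype.val) <| by
    refine ⟨lowIdx_injective.sumElim Subtype.val_injective fun p a ↦ lowIdx_ne_highIdx p.1 p.2 a,
      fun a ↦ ?_⟩
    by_cases ha : a.2.1 t + 2 ≤ d a.1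
    · exact ⟨Sum.inr ⟨a, ha⟩, rfl⟩
    · obtain ⟨r, hr⟩ := exists_lowIdx_eq (hd := hd) ha
      exact ⟨Sum.inl (a.1, r), hr⟩

theorem eval_single_form (i : Fin 2) : eval (Pi.single t 1) (form c i) = c (lowIdx hd t i t) := by
  have hexp : Finsupp.single t (d i) = Finsupp.single t (d i - 1) + Finsupp.single t 1 := by
    rw [← Finsupp.single_add, Nat.sub_add_cancel (hd i)]
  rw [eval_single_of_isHomogeneous (isHomogeneous_form c i), hexp]
  exact coeff_form c (lowIdx hd t i t)

theorem eval_single_pderiv_form {r : Fin 4} (hr : r ≠ t) (i : Fin 2) :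
    eval (Pi.single t 1) (pderiv r (form c i)) = c (lowIdx hd t i r) := by
  rw [eval_single_pderiv_of_isHomogeneous (isHomogeneous_form c i) hr,
    ← coeff_form c (lowIdx hd t i r), lowIdx]

end Coefficients

section ChartPoint

variable {S : Type*} [CommRing S] {t : Fin 4} {q : Fin 3 → S}

/-- The vector with entry `0` at `t` and the other entries `q`. -/
def chartVector (t : Fin 4) (q : Fin 3 → S) : Fin 4 → S :=
  t.insertNth 0 q

@[simp]
theorem chartVector_self : chartVector t q t = 0 :=
  Fin.insertNth_apply_same ..

@[simp]
theorem chartVector_succAbove (s : Fin 3) : chartVector t q (t.succAbove s) = q s :=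
  Fin.insertNth_apply_succAbove ..

theorem neg_chartVector : -chartVector t q = chartVector t (-q) :=
  Fin.eq_insertNth_iff.2 ⟨by simp, funext fun s ↦ by simp [Fin.removeNth]⟩

/-- The point of the affine chart `x_t = 1` with the other coordinates `q`. -/
def chartPoint (t : Fin 4) (q : Fin 3 → S) : Fin 4 → S :=
  Pi.single t 1 + chartVector t q

@[simp]
theorem chartPoint_self : chartPoint t q t = 1 := by
  simp [chartPoint]

@[simp]
theorem chartPoint_succAbove (s : Fin 3) : chartPoint t q (t.succAbove s) = q s := by
  simp [chartPoint]

theorem comp_chartVector {S' : Type*} [CommRing S'] (g : S →+* S') :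
    g ∘ chartVector t q = chartVector t (g ∘ q) :=
  Fin.eq_insertNth_iff.2 ⟨by simp, funext fun s ↦ by simp [Fin.removeNth]⟩

theorem chartPoint_eq {z : Fin 4 → S} (hz : z t = 1) : chartPoint t (z ∘ t.succAbove) = z := by
  funext r
  rcases Fin.eq_self_or_eq_succAbove t r with rfl | ⟨s, rfl⟩
  · rw [chartPoint_self, hz]
  · rw [chartPoint_succAbove, Function.comp_apply]

end ChartPoint

section IncidenceFamily

variable {d : Fin 2 → ℕ} {hd : ∀ i, 0 < d i} {t : Fin 4} {S : Type*} [CommRing S]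
  {q : Fin 3 → S} {v : Fin 2 × Fin 3 → S} {u : HighIdx d t → S}

/-- The coefficients of the forms which vanish at the coordinate point `e_t` and whose expansion
there has the linear coefficients `v` and the coefficients of higher order `u`. -/
noncomputable def pointedCoef (hd : ∀ i, 0 < d i) (t : Fin 4) (v : Fin 2 × Fin 3 → S)
    (u : HighIdx d t → S) : CoefIdx d → S :=
  Sum.elim (fun p ↦ chartVector t (fun s ↦ v (p.1, s)) p.2) u ∘ (coefIdxEquiv hd t).symm

theorem pointedCoef_lowIdx (i : Fin 2) (r : Fin 4) :
    pointedCoef hd t v u (lowIdx hd t i r) = chartVector t (fun s ↦ v (i, s)) r := by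
  rw [pointedCoef, Function.comp_apply,
    show lowIdx hd t i r = coefIdxEquiv hd t (Sum.inl (i, r)) from rfl, Equiv.symm_apply_apply]
  rfl

theorem pointedCoef_highIdx (a : HighIdx d t) : pointedCoef hd t v u a = u a := by
  rw [pointedCoef, Function.comp_apply,
    show (a : CoefIdx d) = coefIdxEquiv hd t (Sum.inr a) from rfl, Equiv.symm_apply_apply]
  rfl

theorem eq_pointedCoef (hd : ∀ i, 0 < d i) {c : CoefIdx d → S}
    (hc : ∀ i, c (lowIdx hd t i t) = 0) :
    c = pointedCoef hd t (fun p ↦ c (lowIdx hd t p.1 (t.succAbove p.2))) fun a ↦ c a := by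
  refine (Equiv.eq_comp_symm _ _ _).2 (funext fun x ↦ ?_)
  obtain ⟨i, r⟩ | a := x
  · change c (lowIdx hd t i r) = chartVector t (fun s ↦ c (lowIdx hd t i (t.succAbove s))) r
    rcases Fin.eq_self_or_eq_succAbove t r with rfl | ⟨s, rfl⟩
    · rw [chartVector_self, hc]
    · rw [chartVector_succAbove]
  · rfl

theorem comp_pointedCoef {S' : Type*} [CommRing S'] (g : S →+* S') :
    g ∘ pointedCoef hd t v u = pointedCoef hd t (g ∘ v) (g ∘ u) := by
  rw [pointedCoef, pointedCoef, ← Function.comp_assoc, Sum.comp_elim]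
  congr 2
  funext p
  exact congr_fun (comp_chartVector (q := fun s ↦ v (p.1, s)) g) p.2

/-- The coefficients of the forms which vanish at the point `chartPoint t q`, where they have the
derivatives `v` and, after moving this point to `e_t`, the coefficients of higher order `u`. -/
noncomputable def incidenceCoef (hd : ∀ i, 0 < d i) (t : Fin 4) (q : Fin 3 → S)
    (v : Fin 2 × Fin 3 → S) (u : HighIdx d t → S) : CoefIdx d → S :=
  shiftCoef t (-chartVector t q) (pointedCoef hd t v u)

theorem comp_incidenceCoef {S' : Type*} [CommRing S'] (g : S →+* S') :
    g ∘ incidenceCoef hd t q v u = incidenceCoef hd t (g ∘ q) (g ∘ v) (g ∘ u) := by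
  have hneg (w : Fin 4 → S) : g ∘ (-w) = -(g ∘ w) := funext fun r ↦ map_neg g (w r)
  rw [incidenceCoef, comp_shiftCoef, comp_pointedCoef, hneg, comp_chartVector, incidenceCoef]

theorem chartShift_form_incidenceCoef (i : Fin 2) :
    chartShift t (chartVector t q) (form (incidenceCoef hd t q v u) i) =
      form (pointedCoef hd t v u) i := by
  rw [incidenceCoef, form_shiftCoef]
  have h0 : (-chartVector t q) t = 0 := by simp
  simpa using chartShift_neg_chartShift h0 (form (pointedCoef hd t v u) i)

theorem eval_form_incidenceCoef (i : Fin 2) :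
    eval (chartPoint t q) (form (incidenceCoef hd t q v u) i) = 0 := by
  rw [chartPoint, ← eval_single_chartShift, chartShift_form_incidenceCoef,
    eval_single_form (hd := hd), pointedCoef_lowIdx, chartVector_self]

theorem eval_pderiv_form_incidenceCoef (i : Fin 2) (s : Fin 3) :
    eval (chartPoint t q) (pderiv (t.succAbove s) (form (incidenceCoef hd t q v u) i)) =
      v (i, s) := by
  have hs := t.succAbove_ne s
  rw [chartPoint, ← eval_single_chartShift, ← pderiv_chartShift hs, chartShift_form_incidenceCoef,
    eval_single_pderiv_form (hd := hd) hs, pointedCoef_lowIdx, chartVector_succAbove]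

theorem exists_eq_incidenceCoef (hd : ∀ i, 0 < d i) {c : CoefIdx d → S}
    (hc : ∀ i, eval (chartPoint t q) (form c i) = 0) :
    ∃ u, c = incidenceCoef hd t q
      (fun p ↦ eval (chartPoint t q) (pderiv (t.succAbove p.2) (form c p.1))) u := by
  set g := shiftCoef t (chartVector t q) c
  have hself (i : Fin 2) : g (lowIdx hd t i t) = 0 := by
    rw [← eval_single_form (c := g), form_shiftCoef, eval_single_chartShift, ← chartPoint, hc]
  have hne (i : Fin 2) (s : Fin 3) : g (lowIdx hd t i (t.succAbove s)) =
      eval (chartPoint t q) (pderiv (t.succAbove s) (form c i)) := by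
    have hs := t.succAbove_ne s
    rw [← eval_single_pderiv_form (c := g) hs, form_shiftCoef, pderiv_chartShift hs,
      eval_single_chartShift, chartPoint]
  refine ⟨fun a ↦ g a, ?_⟩
  rw [incidenceCoef, ← funext fun p : Fin 2 × Fin 3 ↦ hne p.1 p.2, ← eq_pointedCoef hd hself,
    shiftCoef_neg_shiftCoef chartVector_self]

end IncidenceFamily

section DiscriminantIdeal

variable {k : Type*} [CommRing k] {d : Fin 2 → ℕ}

theorem Dideal_le_ker_iff {Q : Type*} [CommRing Q] (g : Cring k d →+* Q) :
    Dideal k d ≤ RingHom.ker g ↔ (∀ i, g (genF k d i) = 0) ∧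
      ∀ i j r s, g (pderiv r (genF k d i)) * g (pderiv s (genF k d j)) =
        g (pderiv s (genF k d i)) * g (pderiv r (genF k d j)) := by
  constructor
  · intro h
    have hJ_lt (r s : Fin 4) (hrs : r < s) :
        g (pderiv r (genF k d 0)) * g (pderiv s (genF k d 1)) =
          g (pderiv s (genF k d 0)) * g (pderiv r (genF k d 1)) := by
      have hrs : g (Jmin k d r s) = 0 := h (Ideal.subset_span (Or.inr ⟨r, s, hrs, rfl⟩))
      rwa [Jmin, map_sub, map_mul, map_mul, sub_eq_zero] at hrs
    have hJ (r s : Fin 4) : g (pderiv r (genF k d 0)) * g (pderiv s (genF k d 1)) =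
        g (pderiv s (genF k d 0)) * g (pderiv r (genF k d 1)) := by
      rcases lt_trichotomy r s with hrs | rfl | hrs
      · exact hJ_lt r s hrs
      · rfl
      · exact (hJ_lt s r hrs).symm
    refine ⟨Fin.forall_fin_two.2 ⟨?_, ?_⟩, Fin.forall_fin_two.2
      ⟨Fin.forall_fin_two.2 ⟨fun r s ↦ mul_comm _ _, hJ⟩,
        Fin.forall_fin_two.2 ⟨fun r s ↦ ?_, fun r s ↦ mul_comm _ _⟩⟩⟩
    · exact h (Ideal.subset_span (Or.inl (Or.inl rfl)))
    · exact h (Ideal.subset_span (Or.inl (Or.inr rfl)))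
    · rw [mul_comm, hJ, mul_comm]
  · rintro ⟨hf, hJ⟩
    rw [Dideal, Ideal.span_le]
    rintro _ ((rfl | rfl) | ⟨r, s, -, rfl⟩)
    · exact hf 0
    · exact hf 1
    · rw [SetLike.mem_coe, RingHom.mem_ker, Jmin, map_sub, map_mul, map_mul, hJ, sub_self]

/-- The coordinate ring of the pairs consisting of a point of the chart `x_t = 1` and of the
coefficients of order at least two, at this point, of two forms of degrees `d`. -/
abbrev ChartBase (k : Type*) [CommRing k] (d : Fin 2 → ℕ) (t : Fin 4) : Type _ :=
  MvPolynomial (Fin 3 ⊕ HighIdx d t) k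

/-- The generic point of the chart `x_t = 1`. -/
noncomputable def genPoint (k : Type*) [CommRing k] (d : Fin 2 → ℕ) (t : Fin 4) (s : Fin 3) :
    ChartBase k d t :=
  X (Sum.inl s)

/-- The specialisation of the coefficients to the generic pair of forms which vanish at the
generic point of the chart `x_t = 1`. -/
noncomputable def incidenceMap (k : Type*) [CommRing k] (hd : ∀ i, 0 < d i) (t : Fin 4) :
    Aring k d →ₐ[k] MvPolynomial (Fin 2 × Fin 3) (ChartBase k d t) :=
  aeval (incidenceCoef hd t (C ∘ genPoint k d t) X (C ∘ X ∘ Sum.inr))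

/-- The specialisation of the coefficients to the generic pair of forms which vanish at the
generic point of the chart `x_t = 1`, where their gradients are linearly dependent. -/
noncomputable def discrMap (k : Type*) [CommRing k] (hd : ∀ i, 0 < d i) (t : Fin 4) (j : Fin 2) :
    Aring k d →ₐ[k] MvPolynomial ({i // i ≠ j} ⊕ Fin 3) (ChartBase k d t) :=
  ((rankOneMap (Fin 3) (ChartBase k d t) j).restrictScalars k).comp (incidenceMap k hd t)

variable {hd : ∀ i, 0 < d i} {t : Fin 4} {j : Fin 2}

theorem rankOneMap_comp_incidenceCoef {K : Type*} [CommRing K] (q : Fin 3 → K)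
    (u : HighIdx d t → K) :
    rankOneMap (Fin 3) K j ∘ incidenceCoef hd t (C ∘ q) X (C ∘ u) =
      incidenceCoef hd t (C ∘ q) (rankOneMap (Fin 3) K j ∘ X) (C ∘ u) := by
  have hC {τ : Type} (w : τ → K) : (rankOneMap (Fin 3) K j).toRingHom ∘ C ∘ w = C ∘ w :=
    funext fun a ↦ algHom_C _ (w a)
  have hcomp := comp_incidenceCoef (hd := hd) (t := t) (q := C ∘ q) (v := X) (u := C ∘ u)
    (rankOneMap (Fin 3) K j).toRingHom
  rwa [hC, hC] at hcomp

theorem discrMap_comp_X :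
    discrMap k hd t j ∘ X = incidenceCoef hd t (C ∘ genPoint k d t)
      (rankOneMap (Fin 3) (ChartBase k d t) j ∘ X) (C ∘ X ∘ Sum.inr) := by
  refine Eq.trans (funext fun a ↦ ?_) (rankOneMap_comp_incidenceCoef _ _)
  rw [Function.comp_apply, discrMap, AlgHom.comp_apply, incidenceMap, aeval_X]
  rfl

/-- The evaluation at the generic point of the chart `x_t = 1` after specialisation of the
coefficients by `discrMap`. -/
noncomputable def discrEval (k : Type*) [CommRing k] (hd : ∀ i, 0 < d i) (t : Fin 4) (j : Fin 2) :
    Cring k d →+* MvPolynomial ({i // i ≠ j} ⊕ Fin 3) (ChartBase k d t) :=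
  (eval (chartPoint t (C ∘ genPoint k d t))).comp (map (discrMap k hd t j).toRingHom)

theorem discrEval_C (p : Aring k d) : discrEval k hd t j (C p) = discrMap k hd t j p := by
  simp [discrEval]

theorem discrEval_X_ne_zero [Nontrivial k] (s : Fin 4) : discrEval k hd t j (X s) ≠ 0 := by
  rcases Fin.eq_self_or_eq_succAbove t s with rfl | ⟨s, rfl⟩
  · simp [discrEval]
  · simp [discrEval, genPoint]

theorem Dideal_le_ker_discrEval : Dideal k d ≤ RingHom.ker (discrEval k hd t j) := by
  set z := chartPoint t (C ∘ genPoint k d t)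
  set c := discrMap k hd t j ∘ X with hc
  have hmap (i : Fin 2) : map (discrMap k hd t j).toRingHom (genF k d i) = form c i := map_genF _ i
  have hzero (i : Fin 2) : eval z (form c i) = 0 := by
    rw [hc, discrMap_comp_X, eval_form_incidenceCoef]
  have hpderiv (i : Fin 2) (r : Fin 4) :
      discrEval k hd t j (pderiv r (genF k d i)) = eval z (pderiv r (form c i)) := by
    rw [← hmap, pderiv_map]
    rfl
  refine (Dideal_le_ker_iff _).2 ⟨fun i ↦ ?_, ?_⟩
  · rw [discrEval, RingHom.comp_apply, hmap, hzero]
  simp only [hpderiv]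
  refine mul_eq_mul_of_sum_eq_zero (a := fun i r ↦ eval z (pderiv r (form c i)))
    (z := z) chartPoint_self (fun i ↦ ?_) ?_
  · have heuler := congr_arg (eval z) (isHomogeneous_form c i).sum_X_mul_pderiv
    simpa only [map_sum, map_mul, eval_X, map_nsmul, hzero, smul_zero] using heuler
  · intro i j' r s hr hs
    obtain ⟨r, rfl⟩ := Fin.exists_succAbove_eq hr
    obtain ⟨s, rfl⟩ := Fin.exists_succAbove_eq hs
    simp only [hc, discrMap_comp_X, z, eval_pderiv_form_incidenceCoef]
    exact rankOneMap_X_mul_rankOneMap_X j i j' r s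

theorem discrMap_eq_zero_of_X_pow_mul_C_mem [IsDomain k] {s : Fin 4} {ν : ℕ} {p : Aring k d}
    (h : X s ^ ν * C p ∈ Dideal k d) : discrMap k hd t j p = 0 := by
  have h0 := Dideal_le_ker_discrEval (hd := hd) (t := t) (j := j) h
  rw [RingHom.mem_ker, map_mul, map_pow, discrEval_C] at h0
  exact (mul_eq_zero.1 h0).resolve_left (pow_ne_zero ν (discrEval_X_ne_zero s))

theorem map_C_eq_zero_of_discrMap_eq_zero {Q : Type*} [CommRing Q] {g : Cring k d →+* Q}
    (hg : Dideal k d ≤ RingHom.ker g) (ht : IsUnit (g (X t))) {p : Aring k d}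
    (hp : discrMap k hd t j p = 0) : g (C p) = 0 := by
  obtain ⟨y, hy⟩ := ht.exists_left_inv
  obtain ⟨hgF, hgJ⟩ := (Dideal_le_ker_iff g).1 hg
  set z : Fin 4 → Q := y • g ∘ X
  set c : CoefIdx d → Q := g.comp C ∘ X
  have hz : chartPoint t (z ∘ t.succAbove) = z := chartPoint_eq hy
  have hc (i : Fin 2) : form c i = map (g.comp C) (genF k d i) := (map_genF _ i).symm
  have hzero (i : Fin 2) : eval z (form c i) = 0 := by
    rw [hc, eval_smul_map_of_isHomogeneous (isHomogeneous_genF i) g y]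
    exact mul_eq_zero_of_right _ (hgF i)
  have hpderiv (i : Fin 2) (r : Fin 4) :
      eval z (pderiv r (form c i)) = y ^ (d i - 1) * g (pderiv r (genF k d i)) := by
    rw [hc, pderiv_map]
    exact eval_smul_map_of_isHomogeneous (isHomogeneous_genF i).pderiv g y
  obtain ⟨u, hu⟩ := exists_eq_incidenceCoef (t := t) (q := z ∘ t.succAbove) hd
    fun i ↦ hz.symm ▸ hzero i
  set v : Fin 2 × Fin 3 → Q := fun p ↦
    eval (chartPoint t (z ∘ t.succAbove)) (pderiv (t.succAbove p.2) (form c p.1))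
  have hv (i i' : Fin 2) (r s : Fin 3) : v (i, r) * v (i', s) = v (i, s) * v (i', r) := by
    simp only [v, hz, hpderiv]
    rw [mul_mul_mul_comm, hgJ, mul_mul_mul_comm]
  let β₀ : ChartBase k d t →+* Q :=
    eval₂Hom ((g.comp C).comp C) (Sum.elim (z ∘ t.succAbove) u)
  have hβ : g.comp C = (eval₂Hom β₀ v).comp (incidenceMap k hd t).toRingHom := by
    refine ringHom_ext' ?_ fun a ↦ ?_
    · ext a
      simp [β₀]
    · change c a = eval₂Hom β₀ v (incidenceMap k hd t (X a))
      rw [incidenceMap, aeval_X, ← Function.comp_apply (f := eval₂Hom β₀ v), comp_incidenceCoef, hu]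
      congr 2 <;> ext <;> simp [β₀, genPoint]
  calc
    g (C p) = eval₂ β₀ v (incidenceMap k hd t p) := DFunLike.congr_fun hβ p
    _ = 0 := eval₂_eq_zero_of_rankOneMap_eq_zero β₀ hv hp

theorem comap_eq_ker_discrMap [IsDomain k] (hd : ∀ i, 0 < d i) (t : Fin 4) (j : Fin 2)
    {T : Ideal (Cring k d)} (hT : (T : Set (Cring k d)) =
      {p : Cring k d | ∃ ν : ℕ, ∀ q ∈ mIdeal k d ^ ν, q * p ∈ Dideal k d}) :
    T.comap (algebraMap (Aring k d) (Cring k d)) = RingHom.ker (discrMap k hd t j) := by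
  ext p
  rw [Ideal.mem_comap, RingHom.mem_ker, ← SetLike.mem_coe, hT, algebraMap_eq, Set.mem_ofPred]
  constructor
  · rintro ⟨ν, hν⟩
    have ht : (X t : Cring k d) ∈ mIdeal k d := Ideal.subset_span ⟨t, rfl⟩
    exact discrMap_eq_zero_of_X_pow_mul_C_mem (hν _ (Ideal.pow_mem_pow ht ν))
  · intro hp
    have hpow {s : Fin 4} (hs : discrMap k hd s j p = 0) : ∃ ν : ℕ, X s ^ ν * C p ∈ Dideal k d :=
      exists_pow_mul_mem_of_forall_isUnit fun Q _ g hg hgs ↦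
        map_C_eq_zero_of_discrMap_eq_zero hg hgs hs
    obtain ⟨ν, hν⟩ := hpow hp
    have hrad : mIdeal k d ≤ ((Dideal k d).colon {C p}).radical := by
      rw [mIdeal, Ideal.span_le]
      rintro _ ⟨s, rfl⟩
      obtain ⟨μ, hμ⟩ := hpow (discrMap_eq_zero_of_X_pow_mul_C_mem (t := s) hν)
      exact ⟨μ, Submodule.mem_colon_singleton.2 hμ⟩
    obtain ⟨n, hn⟩ :=
      Ideal.exists_pow_le_of_le_radical_of_fg hrad (Submodule.fg_span (Set.finite_range _))
    exact ⟨n, fun x hx ↦ Submodule.mem_colon_singleton.1 (hn hx)⟩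

theorem ker_discrMap_ne_bot [IsDomain k] (hd : ∀ i, 0 < d i) (t : Fin 4) (j : Fin 2) :
    RingHom.ker (discrMap k hd t j) ≠ ⊥ := by
  intro h
  have hinj : Function.Injective (discrMap k hd t j) := (RingHom.injective_iff_ker_eq_bot _).2 h
  let e := (sumAlgEquiv k ({i // i ≠ j} ⊕ Fin 3) (Fin 3 ⊕ HighIdx d t)).symm
  have htrdeg := trdeg_le_of_injective (e.toAlgHom.comp (discrMap k hd t j))
    (e.injective.comp hinj)
  rw [MvPolynomial.trdeg_of_isDomain, MvPolynomial.trdeg_of_isDomain, Cardinal.lift_le,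
    ← Cardinal.mk_congr (coefIdxEquiv hd t)] at htrdeg
  have : Fintype (HighIdx d t) := Fintype.ofFinite _
  rw [Cardinal.mk_fintype, Cardinal.mk_fintype, Nat.cast_le] at htrdeg
  simp only [Fintype.card_sum, Fintype.card_prod, Fintype.card_fin, Fintype.card_subtype_compl,
    Fintype.card_unique] at htrdeg
  omega

end DiscriminantIdeal

section Nodal

variable {d : Fin 2 → ℕ} {S : Type*} [CommRing S] {t : Fin 4}

theorem chartShift_sub_self_mem_sq {I : Ideal S} {q : Fin 4 → S} (hq : ∀ r, q r ∈ I)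
    {F : MvPolynomial (Fin 4) S} (hF : F ∈ I.map C) : chartShift t q F - F ∈ I.map C ^ 2 := by
  have hmem {s : S} (hs : s ∈ I) : C s ∈ I.map (C : S →+* MvPolynomial (Fin 4) S) :=
    Ideal.mem_map_of_mem C hs
  refine map_sub_self_mem_sq_of_mem_span (f := (chartShift t q).toRingHom) rfl (fun G ↦ ?_) ?_ hF
  · have hmk : (Ideal.Quotient.mkₐ S (I.map C)).comp (chartShift t q) =
        Ideal.Quotient.mkₐ S (I.map C) := algHom_ext fun r ↦ by
      rw [AlgHom.comp_apply, chartShift_X]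
      refine Ideal.Quotient.eq.2 ?_
      rw [add_sub_cancel_left]
      exact Ideal.mul_mem_right _ _ (hmem (hq r))
    exact Ideal.Quotient.eq.1 (DFunLike.congr_fun hmk G)
  · rintro _ ⟨s, -, rfl⟩
    have hs : chartShift t q (C s) = C s := algHom_C _ s
    change chartShift t q (C s) - C s ∈ _
    rw [hs, sub_self]
    exact zero_mem _

theorem shiftCoef_sub_self_mem_sq {I : Ideal S} {q : Fin 4 → S} (hq : ∀ r, q r ∈ I)
    {c : CoefIdx d → S} (hc : ∀ a, c a ∈ I) (a : CoefIdx d) :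
    shiftCoef t q c a - c a ∈ I ^ 2 := by
  have hform : form c a.1 ∈ I.map C := mem_map_C_iff.2 (coeff_form_mem hc a.1)
  have hmem := chartShift_sub_self_mem_sq (t := t) hq hform
  rw [← Ideal.map_pow, mem_map_C_iff] at hmem
  have ha := hmem a.2.1
  rwa [coeff_sub, coeff_form] at ha

theorem monomial_lowIdx {hd : ∀ i, 0 < d i} (i : Fin 2) (r : Fin 4) (y : S) :
    monomial (lowIdx hd t i r).2.1 y = C y * (X t ^ (d i - 1) * X r) := by
  rw [X_pow_eq_monomial, X, monomial_mul, C_mul_monomial, one_mul, mul_one]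
  rfl

theorem shiftCoef_single_lowIdx {hd : ∀ i, 0 < d i} {q : Fin 4 → S} (hq : q t = 0) (i : Fin 2)
    (r : Fin 4) : shiftCoef t q (Pi.single (lowIdx hd t i r) 1) =
      Pi.single (lowIdx hd t i r) 1 + Pi.single (lowIdx hd t i t) (q r) := by
  refine coef_ext fun l ↦ ?_
  have hfst (r : Fin 4) : (lowIdx hd t i r).1 = i := rfl
  simp only [form_shiftCoef, form_add, form_single, hfst, monomial_lowIdx]
  split_ifs
  · simp only [map_mul, map_pow, map_one, chartShift_X, hq, map_zero]
    ring
  · simp only [map_zero, add_zero]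

/-- The index of the coefficient of `x_t ^ (d i - 2) * x_r * x_s` in the form of degree `d i`. -/
noncomputable def quadIdx {i : Fin 2} (hi : 2 ≤ d i) (t r s : Fin 4) : CoefIdx d :=
  ⟨i, Finsupp.single t (d i - 2) + Finsupp.single r 1 + Finsupp.single s 1, by
    change Finsupp.degree _ = _
    simp only [map_add, Finsupp.degree_single]
    omega⟩

theorem monomial_quadIdx {i : Fin 2} (hi : 2 ≤ d i) (r s : Fin 4) (y : S) :
    monomial (quadIdx hi t r s).2.1 y = C y * (X t ^ (d i - 2) * X r * X s) := by
  rw [X_pow_eq_monomial, X, X, monomial_mul, monomial_mul, C_mul_monomial, one_mul, one_mul,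
    mul_one]
  rfl

theorem shiftCoef_single_quadIdx {hd : ∀ i, 0 < d i} {q : Fin 4 → S} (hq : q t = 0) {i : Fin 2}
    (hi : 2 ≤ d i) (r s : Fin 4) : shiftCoef t q (Pi.single (quadIdx hi t r s) 1) =
      Pi.single (quadIdx hi t r s) 1 + (Pi.single (lowIdx hd t i s) (q r) +
        Pi.single (lowIdx hd t i r) (q s) + Pi.single (lowIdx hd t i t) (q r * q s)) := by
  have hpow : d i - 1 = d i - 2 + 1 := by omega
  refine coef_ext fun l ↦ ?_
  have hfst (r : Fin 4) : (lowIdx hd t i r).1 = i := rfl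
  have hfst' : (quadIdx hi t r s).1 = i := rfl
  simp only [form_shiftCoef, form_add, form_single, hfst, hfst', monomial_lowIdx,
    monomial_quadIdx, hpow, pow_succ]
  split_ifs
  · simp only [map_mul, map_pow, map_one, chartShift_X, hq, map_zero]
    ring
  · simp only [map_zero, add_zero]

/-- The coefficients of the pair of forms `x_t ^ (d j - 1) * x_r`, `x_t ^ (d i - 2) * x_s * x_u`,
whose common zero locus is a curve with a node at `e_t`; here `r`, `s`, `u` are the indices other
than `t`. -/
noncomputable def nodalCoef (S : Type*) [CommRing S] (hd : ∀ i, 0 < d i) (t : Fin 4) (j : Fin 2)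
    {i : Fin 2} (hi : 2 ≤ d i) : CoefIdx d → S :=
  Pi.single (lowIdx hd t j (t.succAbove 0)) 1 +
    Pi.single (quadIdx hi t (t.succAbove 1) (t.succAbove 2)) 1

variable {hd : ∀ i, 0 < d i} {i j : Fin 2} {hi : 2 ≤ d i}

theorem comp_nodalCoef {S' : Type*} [CommRing S'] (g : S →+* S') :
    g ∘ nodalCoef S hd t j hi = nodalCoef S' hd t j hi := by
  funext a
  simp [nodalCoef, Pi.single_apply, apply_ite g]

/-- The change of `nodalCoef` under the translation by a vector with entries `y` at the indices
other than `t`. -/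
noncomputable def nodalIncrement (hd : ∀ i, 0 < d i) (t : Fin 4) (j i : Fin 2) (y : Fin 3 → S) :
    CoefIdx d → S :=
  Pi.single (lowIdx hd t j t) (y 0) + (Pi.single (lowIdx hd t i (t.succAbove 2)) (y 1) +
    Pi.single (lowIdx hd t i (t.succAbove 1)) (y 2) + Pi.single (lowIdx hd t i t) (y 1 * y 2))

theorem shiftCoef_chartVector_nodalCoef (y : Fin 3 → S) :
    shiftCoef t (chartVector t y) (nodalCoef S hd t j hi) =
      nodalCoef S hd t j hi + nodalIncrement hd t j i y := by
  rw [nodalCoef, shiftCoef_add, shiftCoef_single_lowIdx chartVector_self,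
    shiftCoef_single_quadIdx (hd := hd) chartVector_self, nodalIncrement]
  simp only [chartVector_succAbove]
  abel

theorem nodalIncrement_mem {I : Ideal S} {y : Fin 3 → S} (hy : ∀ s, y s ∈ I) (a : CoefIdx d) :
    nodalIncrement hd t j i y a ∈ I := by
  have hsingle {b : CoefIdx d} {s : S} (hs : s ∈ I) : (Pi.single b s : CoefIdx d → S) a ∈ I := by
    rw [Pi.single_apply]
    split_ifs
    exacts [hs, zero_mem I]
  exact add_mem (hsingle (hy 0)) (add_mem (add_mem (hsingle (hy 1)) (hsingle (hy 2)))
    (hsingle (Ideal.mul_mem_right _ _ (hy 1))))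

theorem lowIdx_inj {i i' : Fin 2} {r r' : Fin 4} :
    lowIdx hd t i r = lowIdx hd t i' r' ↔ i = i' ∧ r = r' :=
  (lowIdx_injective (hd := hd) (t := t)).eq_iff (a := (i, r)) (b := (i', r')) |>.trans
    Prod.mk_inj

theorem nodalIncrement_highIdx (y : Fin 3 → S) (a : HighIdx d t) :
    nodalIncrement hd t j i y a = 0 := by
  simp [nodalIncrement, (lowIdx_ne_highIdx _ _ a).symm]

theorem nodalCoef_lowIdx (l : Fin 2) (r : Fin 4) :
    nodalCoef S hd t j hi (lowIdx hd t l r) = if l = j ∧ r = t.succAbove 0 then 1 else 0 := by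
  have hquad : (quadIdx hi t (t.succAbove 1) (t.succAbove 2)).2.1 t + 2 ≤ d i := by
    simp only [quadIdx, Finsupp.add_apply, Finsupp.single_eq_same,
      Finsupp.single_eq_of_ne (t.succAbove_ne _).symm]
    omega
  have hne := lowIdx_ne_highIdx (hd := hd) l r ⟨_, hquad⟩
  simp [nodalCoef, Pi.single_apply, hne, lowIdx_inj]

/-- The coefficients of forms which vanish at `e_t` and have the coefficients `c` in order at least
two there; the gradient of the form of degree `d j` at `e_t` is given by `c`, and that of the other
form is `e` times it. -/
noncomputable def tangentCoef (hd : ∀ i, 0 < d i) (t : Fin 4) (j : Fin 2) (c : CoefIdx d → S)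
    (e : S) : CoefIdx d → S :=
  pointedCoef hd t (fun p ↦ (if p.1 = j then 1 else e) * c (lowIdx hd t j (t.succAbove p.2)))
    fun a ↦ c a

theorem tangentCoef_sub_mem_sq (hij : i ≠ j) {I : Ideal S} {x : CoefIdx d → S}
    (hx : ∀ a, x a ∈ I) (hx0 : x (lowIdx hd t i t) = 0) (a : CoefIdx d) :
    tangentCoef hd t j (nodalCoef S hd t j hi + x) (x (lowIdx hd t i (t.succAbove 0))) a -
      nodalCoef S hd t j hi a - x a + nodalIncrement hd t j i ![x (lowIdx hd t j t),
        x (lowIdx hd t i (t.succAbove 2)), x (lowIdx hd t i (t.succAbove 1))] a ∈ I ^ 2 := by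
  have hmul (a b : CoefIdx d) : x a * x b ∈ I ^ 2 := sq I ▸ Ideal.mul_mem_mul (hx a) (hx b)
  by_cases ha : a.2.1 t + 2 ≤ d a.1
  · rw [nodalIncrement_highIdx _ ⟨a, ha⟩, tangentCoef, pointedCoef_highIdx ⟨a, ha⟩, Pi.add_apply]
    simp
  obtain ⟨r, hr⟩ := exists_lowIdx_eq (hd := hd) ha
  generalize a.1 = l at hr
  subst hr
  rw [tangentCoef, pointedCoef_lowIdx, nodalCoef_lowIdx]
  obtain rfl | rfl : l = i ∨ l = j := by omega
  · rcases Fin.eq_self_or_eq_succAbove t r with rfl | ⟨s, rfl⟩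
    · simp [hij, hx0, nodalIncrement, lowIdx_inj, hmul]
    · fin_cases s <;>
        simp [hij, nodalIncrement, lowIdx_inj, hmul, nodalCoef_lowIdx, mul_add]
  · rcases Fin.eq_self_or_eq_succAbove t r with rfl | ⟨s, rfl⟩
    · simp [nodalIncrement, lowIdx_inj, hij.symm]
    · simp [nodalIncrement, lowIdx_inj, hij.symm, nodalCoef_lowIdx]

theorem exists_incidenceCoef_sub_mem_sq (hij : i ≠ j) (hi : 2 ≤ d i) {I : Ideal S}
    {x : CoefIdx d → S} (hx : ∀ a, x a ∈ I) (hx0 : x (lowIdx hd t i t) = 0) :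
    ∃ (q b : Fin 3 → S) (e : S) (u : HighIdx d t → S), ∀ a,
      incidenceCoef hd t q (fun p ↦ (if p.1 = j then 1 else e) * b p.2) u a - x a -
        nodalCoef S hd t j hi a ∈ I ^ 2 := by
  set N := nodalCoef S hd t j hi
  let y : Fin 3 → S := ![x (lowIdx hd t j t), x (lowIdx hd t i (t.succAbove 2)),
    x (lowIdx hd t i (t.succAbove 1))]
  let e := x (lowIdx hd t i (t.succAbove 0))
  set P := tangentCoef hd t j (N + x) e
  set K := nodalIncrement hd t j i y
  have hy (s : Fin 3) : y s ∈ I := by fin_cases s <;> exact hx _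
  have hchart (r : Fin 4) : chartVector t y r ∈ I := by
    rcases Fin.eq_self_or_eq_succAbove t r with rfl | ⟨s, rfl⟩
    · rw [chartVector_self]
      exact zero_mem I
    · rw [chartVector_succAbove]
      exact hy s
  have hP (a : CoefIdx d) : P a - N a - x a + K a ∈ I ^ 2 := tangentCoef_sub_mem_sq hij hx hx0 a
  have hPN (a : CoefIdx d) : (P - N) a ∈ I := by
    rw [Pi.sub_apply, show P a - N a = P a - N a - x a + K a + (x a - K a) by ring]
    exact add_mem (Ideal.pow_le_self two_ne_zero (hP a)) (sub_mem (hx a) (nodalIncrement_mem hy a))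
  -- Moving `e_t` to `e_t - y` translates `N` by `K`, which makes up for the coefficients of `x`
  -- that the rank condition on the gradients leaves no room for.
  refine ⟨-y, fun s ↦ (N + x) (lowIdx hd t j (t.succAbove s)), e, fun a ↦ (N + x) a, fun a ↦ ?_⟩
  have hshift :
      shiftCoef t (chartVector t y) P = N + K + shiftCoef t (chartVector t y) (P - N) := by
    rw [← shiftCoef_chartVector_nodalCoef, ← shiftCoef_add, add_sub_cancel]
  rw [incidenceCoef, neg_chartVector, neg_neg]
  change shiftCoef t (chartVector t y) P a - x a - N a ∈ I ^ 2
  have hmem := add_mem (shiftCoef_sub_self_mem_sq (t := t) hchart hPN a) (hP a)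
  convert hmem using 1
  rw [hshift]
  simp only [Pi.add_apply, Pi.sub_apply]
  ring

end Nodal

section Independence

variable {k : Type*} [CommRing k] {d : Fin 2 → ℕ} {hd : ∀ i, 0 < d i} {t : Fin 4} {i j : Fin 2}

theorem exists_comp_discrMap_eq_incidenceCoef {S : Type*} [CommRing S] [Algebra k S]
    (q b : Fin 3 → S) (e : S) (u : HighIdx d t → S) :
    ∃ g : MvPolynomial ({i // i ≠ j} ⊕ Fin 3) (ChartBase k d t) →+* S,
      g.comp (discrMap k hd t j).toRingHom =
        (aeval (incidenceCoef hd t q (fun p ↦ (if p.1 = j then 1 else e) * b p.2) u) :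
          Aring k d →ₐ[k] S) := by
  let g : MvPolynomial ({i // i ≠ j} ⊕ Fin 3) (ChartBase k d t) →+* S :=
    eval₂Hom (aeval (Sum.elim q u) : ChartBase k d t →ₐ[k] S) (Sum.elim (fun _ ↦ e) b)
  have hgq : g ∘ C ∘ genPoint k d t = q := by
    funext s
    simp [g, genPoint]
  have hgu : g ∘ C ∘ X ∘ Sum.inr = u := by
    funext a
    simp [g]
  have hgv : g ∘ rankOneMap (Fin 3) (ChartBase k d t) j ∘ X =
      fun p ↦ (if p.1 = j then 1 else e) * b p.2 := by
    funext ⟨i, r⟩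
    rcases eq_or_ne i j with rfl | h
    · simp [g, rankOneMap_X_self]
    · simp [g, rankOneMap_X_of_ne h, h]
  refine ⟨g, ringHom_ext' ?_ fun a ↦ ?_⟩
  · ext c
    simp [g, algHom_C]
  · calc
      g (discrMap k hd t j (X a)) = (g ∘ discrMap k hd t j ∘ X) a := rfl
      _ = _ := by
        rw [discrMap_comp_X, comp_incidenceCoef, hgq, hgu, hgv]
        exact (aeval_X _ a).symm

theorem eq_zero_of_discrMap_rename_eq_zero (hij : i ≠ j) (hi : 2 ≤ d i)
    {p : MvPolynomial {a // a ≠ lowIdx hd t i t} k}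
    (hp : discrMap k hd t j (rename Subtype.val p) = 0) : p = 0 := by
  let x : CoefIdx d → MvPolynomial {a // a ≠ lowIdx hd t i t} k :=
    fun a ↦ if h : a ≠ lowIdx hd t i t then X ⟨a, h⟩ else 0
  have hx (a : CoefIdx d) : x a ∈ idealOfVars {a // a ≠ lowIdx hd t i t} k := by
    simp only [x]
    split_ifs
    exacts [Ideal.subset_span ⟨_, rfl⟩, zero_mem _]
  obtain ⟨q, b, e, u, hF⟩ :=
    exists_incidenceCoef_sub_mem_sq (hd := hd) (t := t) hij hi hx (dif_neg (by simp))
  set F := incidenceCoef hd t q (fun p ↦ (if p.1 = j then 1 else e) * b p.2) u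
  obtain ⟨g, hg⟩ := exists_comp_discrMap_eq_incidenceCoef (k := k) (hd := hd) (j := j) q b e u
  have hinj := aeval_injective_of_sub_X_sub_C_mem_sq (F := F ∘ Subtype.val)
    (c := fun a ↦ nodalCoef k hd t j hi a.1) fun a ↦ by
      have ha := hF a
      rw [show x a = X a from dif_pos a.2, ← comp_nodalCoef C] at ha
      exact ha
  refine (injective_iff_map_eq_zero _).1 hinj p ?_
  calc
    aeval (F ∘ Subtype.val) p = aeval F (rename Subtype.val p) := (aeval_rename _ _ _).symm
    _ = g (discrMap k hd t j (rename Subtype.val p)) := (DFunLike.congr_fun hg _).symm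
    _ = 0 := by rw [hp, map_zero]

theorem exists_irreducible_ker_discrMap_eq_span [IsDomain k] [UniqueFactorizationMonoid k]
    (hd : ∀ i, 0 < d i) (t : Fin 4) (hij : i ≠ j) (hi : 2 ≤ d i) :
    ∃ P : Aring k d, Irreducible P ∧ RingHom.ker (discrMap k hd t j) = Ideal.span {P} := by
  have := RingHom.ker_isPrime (discrMap k hd t j)
  refine exists_irreducible_eq_span_of_comap_rename_eq_bot (lowIdx hd t i t)
    (ker_discrMap_ne_bot hd t j) ?_
  exact (Submodule.eq_bot_iff _).2 fun p hp ↦ eq_zero_of_discrMap_rename_eq_zero hij hi hp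

end Independence

/-- **Theorem.** If `k` is a UFD and `d₁ + d₂ ≥ 3`, then the defining ideal
`𝔓 = T_𝔪(𝒟) ∩ A` of the discriminant scheme of the generic complete intersection curve of
bidegree `(d₁,d₂)` in `ℙ³` is a principal ideal of `A` generated by an irreducible element. -/
theorem discriminant_ideal_principal_irreducible (k : Type*) [CommRing k] [IsDomain k]
    [UniqueFactorizationMonoid k] (d : Fin 2 → ℕ)
    (hd : ∀ i, 0 < d i) (hdeg : 3 ≤ d 0 + d 1) (T : Ideal (Cring k d))
    (hT : (T : Set (Cring k d)) =
      {p : Cring k d | ∃ ν : ℕ, ∀ q ∈ (mIdeal k d) ^ ν, q * p ∈ Dideal k d}) :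
    ∃ P : Aring k d, Irreducible P ∧
      T.comap (algebraMap (Aring k d) (Cring k d)) = Ideal.span {P} := by
  have h : 2 ≤ d 1 ∨ 2 ≤ d 0 := by
    have := hd 0
    have := hd 1
    omega
  rcases h with h | h
  · rw [comap_eq_ker_discrMap hd 0 0 hT]
    exact exists_irreducible_ker_discrMap_eq_span hd 0 one_ne_zero h
  · rw [comap_eq_ker_discrMap hd 0 1 hT]
    exact exists_irreducible_ker_discrMap_eq_span hd 0 zero_ne_one h
end
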